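/- arXiv:1403.7226 — 2 statements merged into one kernel-verified Lean document; each statement's English description precedes it below -/
import Mathlib

section
/- Let k^{a₁…a_ℓ} be a Killing ℓ-tensor on ℝ^n. Then the ℓ-th order differential operator D^k defined on smooth functions f : ℝ^n → ℝ by D^k f = Σ_{i=0}^{ℓ} 2^{-i} \binom{ℓ}{i} (∂_{a₁}⋯∂_{a_i} k^{a₁…a_ℓ}) ∂_{a_{i+1}}⋯∂_{a_ℓ} f (summation over all indices a₁,…,a_ℓ from 1 to n) commutes with the Laplace operator: Δ∘D^k = D^k∘Δ on smooth functions. In particular, D^k has principal symbol k. -/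
/-!
The operator `D^k` is the Weyl quantization of the symbol `k^{a₁…a_ℓ} p_{a₁}⋯p_{a_ℓ}`, and for Weyl
quantization the commutator with a quadratic symbol is the quantization of the Poisson bracket; the
bracket with `g^{ab} p_a p_b` is the Killing expression, hence zero.

Concretely, put `W_s(u, v) = ∏_{c ∈ s} (½ ∂_c ⊗ 1 + 1 ⊗ ∂_c) (u ⊗ v)` (followed by multiplication)
for a multiset `s` of indices; this makes sense because the factors commute. Expanding the product
over subsets, and using that `k` is symmetric so that only the size of the subset matters, gives
`D^k f = ∑_b W_b(k^b, f)` (`sum_weyl_eq`); the binomial coefficients count subsets.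

By the Leibniz rule `ΔW_s(u, v) - W_s(u, Δv) = W_s(Δu, v) + 2 W_s(∂^c u, ∂_c v)`, and the right-hand
side is `2 ∑_c W_{c, s}(∂^c u, v)` (`weyl_contract`). Therefore
`Δ D^k f - D^k Δf = 2 ∑_{c, b} W_{c, b}(∂^c k^b, f)`. As `W_{c, b}` is symmetric in all the indices
`c, b₁, …, b_ℓ`, only the symmetrization of `∂^c k^b` contributes, and that vanishes by the Killing
equation.
-/

noncomputable section

/-- Partial derivative `∂_a f` in the `a`-th coordinate direction on `ℝⁿ`. -/
def pd {n : ℕ} (a : Fin n) (f : (Fin n → ℝ) → ℝ) : (Fin n → ℝ) → ℝ :=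
  fun x => fderiv ℝ f x (Pi.single a 1)

/-- Raised partial derivative `∂^a f = g^{ab} ∂_b f`. -/
def pdUp {n : ℕ} (ginv : Matrix (Fin n) (Fin n) ℝ) (a : Fin n)
    (f : (Fin n → ℝ) → ℝ) : (Fin n → ℝ) → ℝ :=
  fun x => ∑ b, ginv a b * pd b f x

/-- Laplace operator `Δ f = g^{ab} ∂_a ∂_b f`. -/
def lap {n : ℕ} (ginv : Matrix (Fin n) (Fin n) ℝ) (f : (Fin n → ℝ) → ℝ) :
    (Fin n → ℝ) → ℝ :=
  fun x => ∑ a, ∑ b, ginv a b * pd a (pd b f) x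

/-- Iterated partial derivative `∂_{i 0} ⋯ ∂_{i (m-1)} f` along a tuple of indices. -/
def pdIter {n : ℕ} : (m : ℕ) → (Fin m → Fin n) → ((Fin n → ℝ) → ℝ) → ((Fin n → ℝ) → ℝ)
  | 0, _, f => f
  | m + 1, i, f => pd (i 0) (pdIter m (fun j => i j.succ) f)

/-- A (smooth, totally symmetric) Killing `ℓ`-tensor: `∂^{(a₀} k^{a₁…a_ℓ)} = 0`. -/
def IsKillingTensor {n : ℕ} (ginv : Matrix (Fin n) (Fin n) ℝ) (ℓ : ℕ)
    (k : (Fin ℓ → Fin n) → (Fin n → ℝ) → ℝ) : Prop :=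
  (∀ i, ContDiff ℝ (⊤ : ℕ∞) (k i)) ∧
  (∀ (σ : Equiv.Perm (Fin ℓ)) (i : Fin ℓ → Fin n), k (i ∘ σ) = k i) ∧
  (∀ (i : Fin (ℓ + 1) → Fin n) (x : Fin n → ℝ),
    ∑ σ : Equiv.Perm (Fin (ℓ + 1)),
      pdUp ginv (i (σ 0)) (k (fun j => i (σ j.succ))) x = 0)

end

/-! ### Commuting derivatives on the algebra of smooth functions -/

/-- The algebra of smooth real functions on `ℝⁿ`. -/
def smoothAlg (n : ℕ) : Subalgebra ℝ ((Fin n → ℝ) → ℝ) where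
  carrier := {f | ContDiff ℝ (⊤ : ℕ∞) f}
  mul_mem' := by
    intro f g hf hg
    exact ContDiff.mul (Set.mem_ofPred.1 hf) (Set.mem_ofPred.1 hg)
  add_mem' := by
    intro f g hf hg
    exact ContDiff.add (Set.mem_ofPred.1 hf) (Set.mem_ofPred.1 hg)
  algebraMap_mem' := fun r => (contDiff_const : ContDiff ℝ (⊤ : ℕ∞) fun _ : Fin n → ℝ => r)

lemma smoothAlg.contDiff {n : ℕ} (f : smoothAlg n) : ContDiff ℝ (⊤ : ℕ∞) f.1 := f.2

lemma smoothAlg.diff {n : ℕ} (f : smoothAlg n) : Differentiable ℝ f.1 :=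
  (smoothAlg.contDiff f).differentiable (by simp)

lemma contDiff_pd {n : ℕ} (c : Fin n) {f : (Fin n → ℝ) → ℝ} (hf : ContDiff ℝ (⊤ : ℕ∞) f) :
    ContDiff ℝ (⊤ : ℕ∞) (pd c f) := by
  unfold pd
  exact (hf.fderiv_right (m := (⊤ : ℕ∞)) (by simp)).clm_apply contDiff_const

/-- The partial derivative `∂_c` as a linear endomorphism of the smooth functions. -/
noncomputable def dd {n : ℕ} (c : Fin n) : smoothAlg n →ₗ[ℝ] smoothAlg n where
  toFun f := ⟨pd c f.1, contDiff_pd c f.2⟩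
  map_add' f g := by
    ext x
    simp [pd, fderiv_add (smoothAlg.diff f x) (smoothAlg.diff g x)]
  map_smul' r f := by
    ext x
    simp [pd, fderiv_const_smul (smoothAlg.diff f x)]

@[simp] lemma dd_coe {n : ℕ} (c : Fin n) (f : smoothAlg n) :
    (dd c f : (Fin n → ℝ) → ℝ) = pd c f := rfl

lemma dd_mul {n : ℕ} (c : Fin n) (f g : smoothAlg n) :
    dd c (f * g) = dd c f * g + f * dd c g := by
  ext x
  simp [pd, fderiv_mul (smoothAlg.diff f x) (smoothAlg.diff g x)]
  ring

lemma dd_comm {n : ℕ} (c e : Fin n) (f : smoothAlg n) : dd c (dd e f) = dd e (dd c f) := by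
  ext x
  have hd : DifferentiableAt ℝ (fderiv ℝ f.1) x :=
    ((smoothAlg.contDiff f).fderiv_right (m := (⊤ : ℕ∞)) (by simp)).differentiable (by simp) x
  have key : ∀ a b : Fin n,
      pd a (pd b f.1) x = fderiv ℝ (fderiv ℝ f.1) x (Pi.single a 1) (Pi.single b 1) := by
    intro a b
    unfold pd
    rw [fderiv_clm_apply hd (differentiableAt_const _)]
    simp
  have hs : IsSymmSndFDerivAt ℝ f.1 x :=
    (smoothAlg.contDiff f).contDiffAt.isSymmSndFDerivAt (by
      simpa using WithTop.coe_le_coe.2 (le_top : (2 : ℕ∞) ≤ ⊤))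
  simpa [key] using hs.eq (Pi.single c 1) (Pi.single e 1)

instance {n : ℕ} : LeftCommutative (fun (c : Fin n) (u : smoothAlg n) => dd c u) :=
  ⟨fun c e u => dd_comm c e u⟩

/-- The iterated derivative `∏_{c ∈ s} ∂_c u` along a multiset of indices; a multiset suffices
because partial derivatives of smooth functions commute. -/
noncomputable def multiD {n : ℕ} (s : Multiset (Fin n)) (u : smoothAlg n) : smoothAlg n :=
  s.foldr (fun c u => dd c u) u

@[simp] lemma multiD_zero {n : ℕ} (u : smoothAlg n) : multiD 0 u = u := rfl

@[simp] lemma multiD_cons {n : ℕ} (c : Fin n) (s : Multiset (Fin n)) (u : smoothAlg n) :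
    multiD (c ::ₘ s) u = dd c (multiD s u) := by
  simp [multiD]

lemma multiD_dd {n : ℕ} (c : Fin n) (s : Multiset (Fin n)) (u : smoothAlg n) :
    multiD s (dd c u) = dd c (multiD s u) := by
  induction s using Multiset.induction_on with
  | empty => simp
  | cons e s ih => simp [ih, dd_comm]

lemma pdIter_eq {n : ℕ} (m : ℕ) (i : Fin m → Fin n) (u : smoothAlg n) :
    pdIter m i u.1 = (multiD (Finset.univ.val.map i) u).1 := by
  induction m with
  | zero => simp [pdIter]
  | succ m ih =>
    have h : (Finset.univ : Finset (Fin (m + 1))).val.map i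
        = i 0 ::ₘ (Finset.univ : Finset (Fin m)).val.map (fun j => i j.succ) := by
      rw [Fin.univ_succ]
      simp [Function.comp_def]
    rw [h, multiD_cons, dd_coe, ← ih]
    rfl

/-! ### The Weyl-ordered bidifferential operator -/

/-- The map `φ ↦ ((u, v) ↦ ½ φ(∂_c u, v) + φ(u, ∂_c v))` on bilinear maps. -/
noncomputable def weylStep {n : ℕ} (c : Fin n) (φ : smoothAlg n →ₗ[ℝ] smoothAlg n →ₗ[ℝ] smoothAlg n) :
    smoothAlg n →ₗ[ℝ] smoothAlg n →ₗ[ℝ] smoothAlg n :=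
  (2⁻¹ : ℝ) • (φ ∘ₗ dd c) + φ.compl₂ (dd c)

lemma weylStep_apply {n : ℕ} (c : Fin n)
    (φ : smoothAlg n →ₗ[ℝ] smoothAlg n →ₗ[ℝ] smoothAlg n) (u v : smoothAlg n) :
    weylStep c φ u v = (2⁻¹ : ℝ) • φ (dd c u) v + φ u (dd c v) := rfl

instance {n : ℕ} : LeftCommutative (weylStep (n := n)) := ⟨by
  intro c e φ
  refine LinearMap.ext fun u => LinearMap.ext fun v => ?_
  simp only [weylStep_apply, dd_comm c e, smul_add]
  abel⟩

/-- The bidifferential operator `∏_{c ∈ s} (½ ∂_c ⊗ 1 + 1 ⊗ ∂_c)` followed by multiplication. -/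
noncomputable def weyl {n : ℕ} (s : Multiset (Fin n)) :
    smoothAlg n →ₗ[ℝ] smoothAlg n →ₗ[ℝ] smoothAlg n :=
  s.foldr weylStep (LinearMap.mul ℝ (smoothAlg n))

@[simp] lemma weyl_zero {n : ℕ} (u v : smoothAlg n) : weyl 0 u v = u * v := rfl

lemma weyl_cons {n : ℕ} (c : Fin n) (s : Multiset (Fin n)) (u v : smoothAlg n) :
    weyl (c ::ₘ s) u v = (2⁻¹ : ℝ) • weyl s (dd c u) v + weyl s u (dd c v) := by
  rw [weyl, Multiset.foldr_cons, weylStep_apply]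
  rfl

lemma dd_weyl {n : ℕ} (c : Fin n) (s : Multiset (Fin n)) (u v : smoothAlg n) :
    dd c (weyl s u v) = weyl s (dd c u) v + weyl s u (dd c v) := by
  induction s using Multiset.induction_on generalizing u v with
  | empty => simp [dd_mul]
  | cons e s ih =>
    simp only [weyl_cons, map_add, map_smul, ih, smul_add, dd_comm c e]
    abel

/-- The binomial-type expansion of the product defining `weyl` over subsets of the factors. -/
lemma weyl_expand {n : ℕ} {ι : Type*} [DecidableEq ι] (S : Finset ι) (b : ι → Fin n)
    (u v : smoothAlg n) :
    weyl (S.val.map b) u v = ∑ T ∈ S.powerset,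
      (2⁻¹ : ℝ) ^ T.card • (multiD (T.val.map b) u * multiD ((S \ T).val.map b) v) := by
  induction S using Finset.induction_on generalizing u v with
  | empty => simp
  | insert c S hc ih =>
    rw [Finset.insert_val_of_notMem hc, Multiset.map_cons, weyl_cons, ih, ih,
      Finset.sum_powerset_insert hc, add_comm, Finset.smul_sum]
    congr 1
    · refine Finset.sum_congr rfl fun T hT => ?_
      have hcT : c ∉ T := fun h => hc (Finset.mem_powerset.1 hT h)
      have hcS : c ∉ S \ T := fun h => hc (Finset.mem_sdiff.1 h).1
      rw [Finset.insert_sdiff_of_notMem _ hcT, Finset.insert_val_of_notMem hcS,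
        Multiset.map_cons, multiD_cons, multiD_dd]
    · refine Finset.sum_congr rfl fun T hT => ?_
      have hcT : c ∉ T := fun h => hc (Finset.mem_powerset.1 hT h)
      have h2 : insert c S \ insert c T = S \ T := by
        ext j
        simp only [Finset.mem_sdiff, Finset.mem_insert]
        grind
      rw [h2, Finset.insert_val_of_notMem hcT, Finset.card_insert_of_notMem hcT,
        Multiset.map_cons, multiD_cons, multiD_dd, smul_smul, pow_succ']

/-! ### Commutation with the Laplacian -/

/-- The Laplacian on smooth functions. -/
noncomputable def lapS {n : ℕ} (ginv : Matrix (Fin n) (Fin n) ℝ) : smoothAlg n →ₗ[ℝ] smoothAlg n :=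
  ∑ a, ∑ b, ginv a b • (dd a ∘ₗ dd b)

lemma lapS_apply {n : ℕ} (ginv : Matrix (Fin n) (Fin n) ℝ) (u : smoothAlg n) :
    lapS ginv u = ∑ a, ∑ b, ginv a b • dd a (dd b u) := by
  simp [lapS]

lemma lapS_coe {n : ℕ} (ginv : Matrix (Fin n) (Fin n) ℝ) (u : smoothAlg n) :
    (lapS ginv u).1 = lap ginv u.1 := by
  ext x
  simp [lapS_apply, lap]

lemma lapS_weyl {n : ℕ} (ginv : Matrix (Fin n) (Fin n) ℝ) (hs : ∀ a b, ginv a b = ginv b a)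
    (s : Multiset (Fin n)) (u v : smoothAlg n) :
    lapS ginv (weyl s u v) = weyl s (lapS ginv u) v + weyl s u (lapS ginv v)
      + (2 : ℝ) • ∑ a, ∑ b, ginv a b • weyl s (dd b u) (dd a v) := by
  have hswap : ∑ a, ∑ b, ginv a b • weyl s (dd a u) (dd b v)
      = ∑ a, ∑ b, ginv a b • weyl s (dd b u) (dd a v) := by
    rw [Finset.sum_comm]
    exact Finset.sum_congr rfl fun a _ => Finset.sum_congr rfl fun b _ => by rw [hs]
  simp only [lapS_apply, dd_weyl, map_add, map_sum, map_smul, LinearMap.sum_apply,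
    LinearMap.smul_apply, smul_add, Finset.sum_add_distrib, hswap, two_smul]
  abel

/-- Adding a factor `½ ∂_c ⊗ 1 + 1 ⊗ ∂_c` contracted with `∂^c ⊗ 1` gives
`½ (Δ ⊗ 1 + 2 ∂^c ⊗ ∂_c)`, which is half of the failure of `weyl s u` to commute with `Δ`. -/
lemma weyl_contract {n : ℕ} (ginv : Matrix (Fin n) (Fin n) ℝ)
    (hs : ∀ a b, ginv a b = ginv b a) (s : Multiset (Fin n)) (u v : smoothAlg n) :
    (2 : ℝ) • ∑ c, weyl (c ::ₘ s) (∑ d, ginv c d • dd d u) v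
      = lapS ginv (weyl s u v) - weyl s u (lapS ginv v) := by
  rw [lapS_weyl ginv hs]
  simp only [weyl_cons, lapS_apply, map_sum, map_smul, LinearMap.sum_apply,
    LinearMap.smul_apply, Finset.sum_add_distrib, smul_add]
  have h : ∀ F : Fin n → Fin n → smoothAlg n, ∑ a, ∑ b, ginv a b • (2⁻¹ : ℝ) • F a b
      = (2⁻¹ : ℝ) • ∑ a, ∑ b, ginv a b • F a b := by
    intro F
    simp only [Finset.smul_sum, smul_comm (2⁻¹ : ℝ)]
  rw [h, smul_inv_smul₀ two_ne_zero]
  abel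

/-! ### Contraction with a symmetric tensor -/

/-- A permutation carrying one subset to another of the same size. -/
lemma exists_perm_map {m : ℕ} {S T : Finset (Fin m)} (h : S.card = T.card) :
    ∃ σ : Equiv.Perm (Fin m), S.map σ.toEmbedding = T := by
  let e : {x // x ∈ S} ≃ {x // x ∈ T} := Finset.equivOfCardEq h
  refine ⟨e.extendSubtype, Finset.eq_of_subset_of_card_le ?_ (by simp [h])⟩
  intro y hy
  obtain ⟨x, hx, rfl⟩ := Finset.mem_map.1 hy
  exact e.extendSubtype_mem x hx

/-- By symmetry of `κ`, the contraction of `κ` with derivatives distributed according to a subset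
depends only on the size of the subset. -/
lemma contract_eq_of_card {n m : ℕ} (κ : (Fin m → Fin n) → smoothAlg n)
    (hκ : ∀ (σ : Equiv.Perm (Fin m)) i, κ (i ∘ σ) = κ i) (v : smoothAlg n)
    {S T : Finset (Fin m)} (h : S.card = T.card) :
    ∑ b : Fin m → Fin n, multiD (S.val.map b) (κ b) * multiD (Sᶜ.val.map b) v
      = ∑ b : Fin m → Fin n, multiD (T.val.map b) (κ b) * multiD (Tᶜ.val.map b) v := by
  obtain ⟨σ, rfl⟩ := exists_perm_map h
  have hc : (S.map σ.toEmbedding)ᶜ = Sᶜ.map σ.toEmbedding := by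
    ext j
    simp
  symm
  refine Fintype.sum_equiv (σ.symm.arrowCongr (Equiv.refl _)) _ _ fun b => ?_
  have hb : (σ.symm.arrowCongr (Equiv.refl (Fin n))) b = b ∘ σ := by
    ext j
    simp
  rw [hb, hκ, hc]
  simp

/-- The contracted bidifferential operator is the operator `D^κ`. -/
lemma sum_weyl_eq {n ℓ : ℕ} (κ : (Fin ℓ → Fin n) → smoothAlg n)
    (hκ : ∀ (σ : Equiv.Perm (Fin ℓ)) i, κ (i ∘ σ) = κ i) (v : smoothAlg n) (x : Fin n → ℝ) :
    (∑ b : Fin ℓ → Fin n, weyl (Finset.univ.val.map b) (κ b) v).1 x =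
      ∑ i : Fin (ℓ + 1), ∑ a : Fin ℓ → Fin n,
        ((2 : ℝ)⁻¹ ^ (i : ℕ) * (ℓ.choose (i : ℕ) : ℝ)) *
          pdIter (i : ℕ) (fun j => a (Fin.castLE i.is_le j)) (κ a).1 x *
          pdIter (ℓ - (i : ℕ))
            (fun j => a ⟨(i : ℕ) + (j : ℕ), by have := j.isLt; have := i.is_le; omega⟩) v.1 x := by
  -- the initial segment of size `i` is the representative of the subsets of size `i`
  let I : ℕ → Finset (Fin ℓ) := fun i => Finset.univ.filter fun j => (j : ℕ) < i
  have hI1 : ∀ i : Fin (ℓ + 1), I i = Finset.univ.map (Fin.castLEEmb i.is_le) := by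
    intro i
    ext j
    simp only [I, Finset.mem_filter, Finset.mem_univ, true_and, Finset.mem_map,
      Fin.castLEEmb_apply]
    exact ⟨fun h => ⟨⟨j, h⟩, rfl⟩, by rintro ⟨y, rfl⟩; simp⟩
  let e : ∀ i : Fin (ℓ + 1), Fin (ℓ - (i : ℕ)) ↪ Fin ℓ := fun i =>
    ⟨fun j => ⟨(i : ℕ) + (j : ℕ), by have := j.isLt; have := i.is_le; omega⟩, fun p q h => by
      simp only [Fin.mk.injEq] at h
      ext
      omega⟩
  have hI2 : ∀ i : Fin (ℓ + 1), (I i)ᶜ = Finset.univ.map (e i) := by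
    intro i
    ext j
    simp only [I, Finset.mem_compl, Finset.mem_filter, Finset.mem_univ, true_and,
      Finset.mem_map, not_lt, e]
    refine ⟨fun h => ⟨⟨j - i, by omega⟩, Fin.ext (Nat.add_sub_of_le h)⟩, ?_⟩
    rintro ⟨y, rfl⟩
    exact Nat.le_add_right _ _
  have hcard : ∀ i : ℕ, i ≤ ℓ → (I i).card = i := by
    intro i hi
    have := congrArg Finset.card (hI1 ⟨i, by omega⟩)
    simpa using this
  let q : ℕ → smoothAlg n := fun i =>
    ∑ b : Fin ℓ → Fin n, multiD ((I i).val.map b) (κ b) * multiD ((I i)ᶜ.val.map b) v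
  have h1 : (∑ b : Fin ℓ → Fin n, weyl (Finset.univ.val.map b) (κ b) v)
      = ∑ i : Fin (ℓ + 1), ((2 : ℝ)⁻¹ ^ (i : ℕ) * (ℓ.choose (i : ℕ) : ℝ)) • q i := by
    simp only [weyl_expand]
    rw [Finset.sum_comm]
    have h2 : ∀ T ∈ (Finset.univ : Finset (Fin ℓ)).powerset,
        ∑ b : Fin ℓ → Fin n, (2⁻¹ : ℝ) ^ T.card •
          (multiD (T.val.map b) (κ b) * multiD ((Finset.univ \ T).val.map b) v)
        = (fun i : ℕ => (2⁻¹ : ℝ) ^ i • q i) T.card := by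
      intro T _
      simp only [← Finset.smul_sum, ← Finset.compl_eq_univ_sdiff]
      congr 1
      refine contract_eq_of_card κ hκ v (hcard _ ?_).symm
      simpa using Finset.card_le_univ T
    rw [Finset.sum_congr rfl h2, Finset.sum_powerset_apply_card fun i : ℕ => (2⁻¹ : ℝ) ^ i • q i,
      Finset.card_univ,
      Fintype.card_fin, Finset.sum_range]
    refine Finset.sum_congr rfl fun i _ => ?_
    rw [← Nat.cast_smul_eq_nsmul ℝ, smul_smul, mul_comm]
  rw [h1]
  simp only [AddSubmonoidClass.coe_finsetSum, Finset.sum_apply]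
  refine Finset.sum_congr rfl fun i _ => ?_
  simp only [q, SetLike.val_smul, AddSubmonoidClass.coe_finsetSum, Pi.smul_apply,
    Finset.sum_apply, Finset.smul_sum]
  refine Finset.sum_congr rfl fun a _ => ?_
  rw [pdIter_eq, pdIter_eq, hI2, hI1]
  simp only [Finset.map_val, Multiset.map_map, smul_eq_mul, MulMemClass.coe_mul, Pi.mul_apply,
    mul_assoc]
  rfl

/-! ### The Killing equation -/

lemma sum_tuple_succ {n ℓ : ℕ} {M : Type*} [AddCommMonoid M]
    (F : Fin n → (Fin ℓ → Fin n) → M) :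
    ∑ b : Fin (ℓ + 1) → Fin n, F (b 0) (fun j => b j.succ) = ∑ b, ∑ c, F c b := by
  rw [Finset.sum_comm, ← Fintype.sum_prod_type' (f := F)]
  exact Fintype.sum_equiv (Fin.consEquiv fun _ => Fin n).symm _ _ fun b => rfl

/-- for a Killing `ℓ`-tensor `k` on `ℝⁿ`, the operator
`D f = Σ_{i=0}^{ℓ} 2⁻ⁱ (ℓ choose i) (∂_{a₁}⋯∂_{a_i} k^{a₁…a_ℓ}) ∂_{a_{i+1}}⋯∂_{a_ℓ} f`
commutes with the Laplacian (in particular its principal symbol is `k`). -/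
theorem stmt1 {n ℓ : ℕ} (hn : 0 < n)
    (g ginv : Matrix (Fin n) (Fin n) ℝ) (hgsym : g.IsSymm) (hginv : g * ginv = 1)
    (k : (Fin ℓ → Fin n) → (Fin n → ℝ) → ℝ)
    (hk : IsKillingTensor ginv ℓ k)
    (D : ((Fin n → ℝ) → ℝ) → ((Fin n → ℝ) → ℝ))
    (hD : ∀ f x, D f x =
      ∑ i : Fin (ℓ + 1), ∑ a : Fin ℓ → Fin n,
        ((2 : ℝ)⁻¹ ^ (i : ℕ) * (ℓ.choose (i : ℕ) : ℝ)) *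
          pdIter (i : ℕ) (fun j => a (Fin.castLE i.is_le j)) (k a) x *
          pdIter (ℓ - (i : ℕ))
            (fun j => a ⟨(i : ℕ) + (j : ℕ), by have := j.isLt; have := i.is_le; omega⟩) f x) :
    ∀ f, ContDiff ℝ (⊤ : ℕ∞) f → ∀ x, lap ginv (D f) x = D (lap ginv f) x := by
  intro f hf x
  obtain ⟨hksm, hksym, hkill⟩ := hk
  have hs : ∀ a b, ginv a b = ginv b a := by
    have h : ginv = g⁻¹ := (Matrix.inv_eq_right_inv hginv).symm
    have h2 : ginv.transpose = ginv := by rw [h, Matrix.transpose_nonsing_inv, hgsym.eq]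
    exact fun a b => by conv_lhs => rw [← h2, Matrix.transpose_apply]
  let κ : (Fin ℓ → Fin n) → smoothAlg n := fun b => ⟨k b, hksm b⟩
  let v : smoothAlg n := ⟨f, hf⟩
  have hκ : ∀ (σ : Equiv.Perm (Fin ℓ)) i, κ (i ∘ σ) = κ i := fun σ i =>
    Subtype.ext (hksym σ i)
  have hDS : ∀ w : smoothAlg n,
      D w.1 = (∑ b : Fin ℓ → Fin n, weyl (Finset.univ.val.map b) (κ b) w).1 := fun w =>
    funext fun y => (hD w.1 y).trans (sum_weyl_eq κ hκ w y).symm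
  -- the Killing equation, as an identity of smooth functions
  have hK : ∀ b : Fin (ℓ + 1) → Fin n, ∑ σ : Equiv.Perm (Fin (ℓ + 1)),
      ∑ d, ginv (b (σ 0)) d • dd d (κ fun j => b (σ j.succ)) = 0 := by
    intro b
    ext y
    simpa [pdUp, κ] using hkill b y
  -- relabelling the summation tuple makes all permutations contribute equally
  have hperm : ∀ σ : Equiv.Perm (Fin (ℓ + 1)), ∑ b : Fin (ℓ + 1) → Fin n,
      weyl (Finset.univ.val.map b)
        (∑ d, ginv (b (σ 0)) d • dd d (κ fun j => b (σ j.succ))) v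
      = ∑ b : Fin (ℓ + 1) → Fin n, weyl (Finset.univ.val.map b)
        (∑ d, ginv (b 0) d • dd d (κ fun j => b j.succ)) v := by
    intro σ
    refine Fintype.sum_equiv (σ.symm.arrowCongr (Equiv.refl _)) _ _ fun b => ?_
    have hb : (σ.symm.arrowCongr (Equiv.refl (Fin n))) b = b ∘ σ := by
      ext j
      simp
    have hm : (Finset.univ : Finset (Fin (ℓ + 1))).val.map (b ∘ σ)
        = (Finset.univ : Finset (Fin (ℓ + 1))).val.map b := by
      rw [← Multiset.map_map]
      congr 1
      exact Multiset.map_univ_val_equiv σ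
    rw [hb, hm]
    rfl
  have hzero : ∑ b : Fin (ℓ + 1) → Fin n, weyl (Finset.univ.val.map b)
        (∑ d, ginv (b 0) d • dd d (κ fun j => b j.succ)) v = 0 := by
    have h : ∑ b : Fin (ℓ + 1) → Fin n, weyl (Finset.univ.val.map b)
        (∑ σ : Equiv.Perm (Fin (ℓ + 1)),
          ∑ d, ginv (b (σ 0)) d • dd d (κ fun j => b (σ j.succ))) v = 0 := by
      simp [hK]
    simp only [map_sum (weyl _) _ (Finset.univ : Finset (Equiv.Perm (Fin (ℓ + 1)))),
      LinearMap.sum_apply _ _ _] at h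
    rw [Finset.sum_comm, Finset.sum_congr rfl fun σ _ => hperm σ, Finset.sum_const,
      ← Nat.cast_smul_eq_nsmul ℝ] at h
    refine (smul_eq_zero.1 h).resolve_left ?_
    simp [Fintype.card_perm, Nat.factorial_ne_zero]
  have hmul : ∀ b : Fin (ℓ + 1) → Fin n, (Finset.univ : Finset (Fin (ℓ + 1))).val.map b
      = b 0 ::ₘ (Finset.univ : Finset (Fin ℓ)).val.map (fun j => b j.succ) := by
    intro b
    rw [Fin.univ_succ]
    simp [Function.comp_def]
  have hcomm : lapS ginv (∑ b : Fin ℓ → Fin n, weyl (Finset.univ.val.map b) (κ b) v)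
      = ∑ b : Fin ℓ → Fin n, weyl (Finset.univ.val.map b) (κ b) (lapS ginv v) := by
    rw [map_sum, ← sub_eq_zero, ← Finset.sum_sub_distrib]
    simp only [← weyl_contract ginv hs, ← Finset.smul_sum]
    simp only [hmul] at hzero
    rw [sum_tuple_succ (fun c b => weyl (c ::ₘ (Finset.univ : Finset (Fin ℓ)).val.map b)
        (∑ d, ginv c d • dd d (κ b)) v)] at hzero
    rw [hzero, smul_zero]
  have hv : lap ginv f = (lapS ginv v).1 := (lapS_coe ginv v).symm
  rw [hv, hDS, show D f = _ from hDS v, ← lapS_coe, hcomm]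
end

section
/- For every ℓ ≥ 0, the real vector space of linear differential operators of order at most ℓ on smooth functions on ℝ^n (with smooth coefficients) that commute with the Laplace operator Δ is finite dimensional, and its dimension equals dim 𝒦_0 + dim 𝒦_1 + ⋯ + dim 𝒦_ℓ = Σ_{i=0}^{ℓ} (1/n)·\binom{n+i}{i+1}·\binom{n+i-1}{i}. -/
noncomputable section

/-- Coefficient data of a linear differential operator of order at most `ℓ`
on smooth functions on `ℝⁿ`. -/
abbrev Coeffs (n ℓ : ℕ) := (m : Fin (ℓ + 1)) → (Fin (m : ℕ) → Fin n) → (Fin n → ℝ) → ℝ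

/-- The differential operator determined by the coefficients `c`. -/
def applyOp {n ℓ : ℕ} (c : Coeffs n ℓ) (f : (Fin n → ℝ) → ℝ) : (Fin n → ℝ) → ℝ :=
  fun x => ∑ m : Fin (ℓ + 1), ∑ i : Fin (m : ℕ) → Fin n, c m i x * pdIter (m : ℕ) i f x

/-- All coefficients are smooth. -/
def SmoothCoeffs {n ℓ : ℕ} (c : Coeffs n ℓ) : Prop :=
  ∀ m i, ContDiff ℝ (⊤ : ℕ∞) (c m i)

/-- The operator given by the coefficients `c` commutes with the Laplacian on
smooth functions. -/
def CommutesWithLap {n ℓ : ℕ} (ginv : Matrix (Fin n) (Fin n) ℝ) (c : Coeffs n ℓ) : Prop :=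
  ∀ f, ContDiff ℝ (⊤ : ℕ∞) f →
    ∀ x, lap ginv (applyOp c f) x = applyOp c (lap ginv f) x

/-! ### Representations of `sl₂` -/

section sl2
variable {V : Type*} [AddCommGroup V] [Module ℝ V] {e f h : Module.End ℝ V}

/-- The commutator `[e, f^{m+1}] = (m+1) f^m (h - m)` in a representation of `sl₂`. -/
theorem sl2_e_f_pow (hef : ∀ v, e (f v) = f (e v) + h v) (hhf : ∀ v, h (f v) = f (h v) - (2 : ℝ) • f v)
    (m : ℕ) (v : V) :
    e ((f ^ (m + 1)) v) =
      (f ^ (m + 1)) (e v) + ((m : ℝ) + 1) • ((f ^ m) (h v) - (m : ℝ) • (f ^ m) v) := by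
  induction m generalizing v with
  | zero => simp [hef]
  | succ m ih =>
    have hs : ∀ k w, (f ^ (k + 1)) w = (f ^ k) (f w) := fun k w => by
      rw [pow_succ]; rfl
    rw [hs (m + 1) v, ih (f v), hef, hhf]
    simp only [map_add, map_sub, map_smul, ← hs]
    push_cast
    module

/-- If `e v = 0` and the functional `χ` has weight `w`, i.e. `χ ∘ h = w χ`, then
`χ (e^k f^k v) = k! w (w-1) ⋯ (w-k+1) χ v`. The vector `v` itself need not be a weight vector, which
allows `χ` to be the extraction of one coefficient of a polynomial. -/
theorem sl2_e_pow_f_pow_functional (hef : ∀ v, e (f v) = f (e v) + h v)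
    (hhf : ∀ v, h (f v) = f (h v) - (2 : ℝ) • f v) (hhe : ∀ v, h (e v) = e (h v) + (2 : ℝ) • e v)
    (χ : V →ₗ[ℝ] ℝ) (w : ℝ) (hχ : ∀ v, χ (h v) = w * χ v) (k : ℕ) (v : V) (hv : e v = 0) :
    χ ((e ^ k) ((f ^ k) v)) = (k.factorial * ∏ i ∈ Finset.range k, (w - i)) * χ v := by
  induction k generalizing v with
  | zero => simp
  | succ k ih =>
    have h1 : e (h v) = 0 := by
      have := hhe v
      rw [hv] at this
      simpa using this.symm
    rw [pow_succ e, Module.End.mul_apply, sl2_e_f_pow hef hhf, hv]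
    have := ih (h v - (k : ℝ) • v) (by simp [h1, hv])
    simp only [map_sub, map_smul, hχ, smul_eq_mul] at this
    simp only [map_zero, zero_add, map_smul, map_sub, smul_eq_mul, this, Finset.prod_range_succ,
      Nat.factorial_succ]
    push_cast
    ring

/-- For a highest weight vector `v` of weight `w`, `e^k f^k v = k! w (w-1) ⋯ (w-k+1) v`. -/
theorem sl2_e_pow_f_pow_eigen (hef : ∀ v, e (f v) = f (e v) + h v)
    (hhf : ∀ v, h (f v) = f (h v) - (2 : ℝ) • f v)
    (w : ℝ) (k : ℕ) (v : V) (hv : e v = 0) (hw : h v = w • v) :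
    (e ^ k) ((f ^ k) v) = (k.factorial * ∏ i ∈ Finset.range k, (w - i)) • v := by
  induction k with
  | zero => simp
  | succ k ih =>
    rw [pow_succ e, Module.End.mul_apply, sl2_e_f_pow hef hhf, hv, hw]
    simp only [map_zero, zero_add, map_smul, map_sub, ih, Finset.prod_range_succ,
      Nat.factorial_succ]
    push_cast
    module

/-- A vector of positive weight `μ` on which `e` is nilpotent lies in the image of `e`, with a preimage one
step down in any filtration `S` that `e` raises and `f` lowers. By induction on the nilpotency order
`N + 1`: `e^N v` is a highest weight vector of weight `μ + 2N`, hence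
`e^N (e (f^{N+1} e^N v))` is a nonzero multiple `c` of `e^N v`, and subtracting
`c⁻¹ e (f^{N+1} e^N v)` from `v` decreases the nilpotency order. -/
theorem sl2_lift (hef : ∀ v, e (f v) = f (e v) + h v)
    (hhf : ∀ v, h (f v) = f (h v) - (2 : ℝ) • f v) (hhe : ∀ v, h (e v) = e (h v) + (2 : ℝ) • e v)
    (S : ℕ → Submodule ℝ V) (hSe : ∀ k, ∀ v ∈ S k, e v ∈ S (k + 1))
    (hSf : ∀ k, ∀ v ∈ S (k + 1), f v ∈ S k) (k μ : ℕ) (hμ : 1 ≤ μ) (N : ℕ) (v : V)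
    (hw : h v = (μ : ℝ) • v) (hv : v ∈ S (k + 1)) (hN : (e ^ N) v = 0) :
    ∃ u ∈ S k, h u = ((μ : ℝ) - 2) • u ∧ e u = v := by
  have hhe' : ∀ (N : ℕ) v (c : ℝ), h v = c • v → h ((e ^ N) v) = (c + 2 * N) • (e ^ N) v := by
    intro N v c hv
    induction N with
    | zero => simp [hv]
    | succ N ih =>
      rw [pow_succ', Module.End.mul_apply, hhe, ih, map_smul]
      push_cast; module
  have hhf' : ∀ (N : ℕ) v (c : ℝ), h v = c • v → h ((f ^ N) v) = (c - 2 * N) • (f ^ N) v := by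
    intro N v c hv
    induction N with
    | zero => simp [hv]
    | succ N ih =>
      rw [pow_succ', Module.End.mul_apply, hhf, ih, map_smul]
      push_cast; module
  have hSe' : ∀ (N k : ℕ) v, v ∈ S k → (e ^ N) v ∈ S (k + N) := by
    intro N k v hv
    induction N with
    | zero => simpa
    | succ N ih =>
      rw [pow_succ', Module.End.mul_apply]
      exact hSe _ _ ih
  have hSf' : ∀ (N k : ℕ) v, v ∈ S (k + N) → (f ^ N) v ∈ S k := by
    intro N k
    induction N with
    | zero => intro v hv; simpa
    | succ N ih =>
      intro v hv
      rw [pow_succ, Module.End.mul_apply]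
      exact ih _ (hSf _ _ hv)
  induction N generalizing v with
  | zero =>
    refine ⟨0, zero_mem _, by simp, ?_⟩
    simpa using hN.symm
  | succ N ih =>
    set w := (e ^ N) v with hwdef
    have hew : e w = 0 := by
      rw [pow_succ', Module.End.mul_apply] at hN
      exact hN
    have hhw : h w = ((μ : ℝ) + 2 * N) • w := hhe' N v _ hw
    have key := sl2_e_pow_f_pow_eigen hef hhf _ (N + 1) w hew hhw
    set c : ℝ := ((N + 1).factorial * ∏ i ∈ Finset.range (N + 1), (((μ : ℝ) + 2 * N) - i))
    -- the factors `μ + 2N - i` with `i ≤ N` are positive because `μ ≥ 1`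
    have hc : c ≠ 0 := by
      refine mul_ne_zero (by positivity) (Finset.prod_ne_zero_iff.mpr ?_)
      intro i hi
      have hi' : i < N + 1 := Finset.mem_range.mp hi
      have h1 : (i : ℝ) ≤ N := by exact_mod_cast Nat.lt_succ_iff.mp hi'
      have h2 : (1 : ℝ) ≤ μ := by exact_mod_cast hμ
      have h3 : (0 : ℝ) ≤ N := by positivity
      linarith
    have hu1S : (f ^ (N + 1)) w ∈ S k := hSf' (N + 1) k w (by
      have := hSe' N _ v hv
      rwa [show k + (N + 1) = k + 1 + N by ring])
    have hu1h : h ((f ^ (N + 1)) w) = ((μ : ℝ) - 2) • (f ^ (N + 1)) w := by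
      rw [hhf' _ _ _ hhw]; push_cast; congr 1; ring
    set u1 := (f ^ (N + 1)) w
    have heu1 : h (e u1) = (μ : ℝ) • e u1 := by
      rw [hhe, hu1h, map_smul]; module
    obtain ⟨u, huS, huh, hue⟩ := ih (v - c⁻¹ • e u1)
      (by rw [map_sub, map_smul, hw, heu1]; module)
      (sub_mem hv ((S _).smul_mem _ (hSe _ _ hu1S)))
      (by
        rw [map_sub, map_smul, ← Module.End.mul_apply (e ^ N) e, ← pow_succ, key, smul_smul,
          inv_mul_cancel₀ hc, one_smul]
        exact sub_self _)
    refine ⟨u + c⁻¹ • u1, add_mem huS ((S _).smul_mem _ hu1S), ?_, ?_⟩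
    · rw [map_add, map_smul, huh, hu1h]; module
    · rw [map_add, map_smul, hue]; abel
end sl2

/-! ### An `sl₂`-triple on polynomials in `(x, ξ)` -/

noncomputable section
namespace Sym
open MvPolynomial

/-- Real polynomials on the cotangent space: the variables `x_a` are `X (Sum.inl a)` and the momenta
`ξ_a` are `X (Sum.inr a)`. -/
abbrev PS (n : ℕ) := MvPolynomial (Fin n ⊕ Fin n) ℝ

/-- The vector field `∑_b u_b ∂_{s b}`, where `s` is `Sum.inl` (derivatives in `x`) or `Sum.inr`
(derivatives in `ξ`). -/
def vf {n : ℕ} (s : Fin n → Fin n ⊕ Fin n) (u : Fin n → PS n) : Derivation ℝ (PS n) (PS n) :=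
  ∑ b, u b • pderiv (s b)

theorem vf_apply {n : ℕ} (s : Fin n → Fin n ⊕ Fin n) (u : Fin n → PS n) (p : PS n) :
    vf s u p = ∑ b, u b * pderiv (s b) p := by
  simp only [vf, ← Derivation.coeFnAddMonoidHom_apply, map_sum, Finset.sum_apply]
  simp

theorem dC_mul {n : ℕ} (D : Derivation ℝ (PS n) (PS n)) (a : ℝ) (p : PS n) :
    D (C a * p) = C a * D p := by
  rw [← smul_eq_C_mul, Derivation.map_smul, smul_eq_C_mul]

/-- The linear form `∑_a K_{ab} t_a`. -/
def lin {n : ℕ} (K : Matrix (Fin n) (Fin n) ℝ) (t : Fin n → Fin n ⊕ Fin n) (b : Fin n) : PS n :=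
  ∑ a, C (K a b) * X (t a)

/-- The second-order operator `∑_{a,b} K_{ab} ∂_{t a} ∂_{t b}`. -/
def lap2 {n : ℕ} (K : Matrix (Fin n) (Fin n) ℝ) (t : Fin n → Fin n ⊕ Fin n) :
    Module.End ℝ (PS n) :=
  ∑ a, ∑ b, K a b • ((pderiv (t a)).toLinearMap ∘ₗ (pderiv (t b)).toLinearMap)

theorem lap2_apply {n : ℕ} (K : Matrix (Fin n) (Fin n) ℝ) (t : Fin n → Fin n ⊕ Fin n) (p : PS n) :
    lap2 K t p = ∑ a, ∑ b, K a b • pderiv (t a) (pderiv (t b) p) := by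
  simp [lap2, LinearMap.sum_apply]

/-- The weight operator `h = ∑_b (ξ_b ∂_{ξ_b} - x_b ∂_{x_b})`, equal to `deg_ξ - deg_x` on monomials. -/
def hD (n : ℕ) : Derivation ℝ (PS n) (PS n) :=
  vf Sum.inr (fun b => X (Sum.inr b)) - vf Sum.inl (fun b => X (Sum.inl b))

/-- The operator `∑_{a,b} K_{ab} (t_a ∂_{s b} + ½ ∂_{s a} ∂_{s b})`. With `(s, t) = (inl, inr)` and the
inverse metric it is half of the action of the Laplacian on symbols and plays the role of `e`; with
`(s, t) = (inr, inl)` and the metric it plays the role of `f`. -/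
def raise {n : ℕ} (K : Matrix (Fin n) (Fin n) ℝ) (s t : Fin n → Fin n ⊕ Fin n) :
    Module.End ℝ (PS n) :=
  (vf s (lin K t)).toLinearMap + (1 / 2 : ℝ) • lap2 K s

theorem raise_apply {n : ℕ} (K : Matrix (Fin n) (Fin n) ℝ) (s t : Fin n → Fin n ⊕ Fin n)
    (p : PS n) : raise K s t p = vf s (lin K t) p + (1 / 2 : ℝ) • lap2 K s p := rfl

theorem vf_X_self {n : ℕ} {s : Fin n → Fin n ⊕ Fin n} (hs : Function.Injective s)
    (u : Fin n → PS n) (c : Fin n) : vf s u (X (s c)) = u c := by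
  classical
  rw [vf_apply, Finset.sum_eq_single c]
  · simp
  · intro b _ hb
    rw [pderiv_X_of_ne (fun h => hb (hs h).symm), mul_zero]
  · simp

theorem vf_X_ne {n : ℕ} {s : Fin n → Fin n ⊕ Fin n}
    (u : Fin n → PS n) (i) (hi : ∀ b, s b ≠ i) : vf s u (X i) = 0 := by
  classical
  rw [vf_apply]
  exact Finset.sum_eq_zero fun b _ => by rw [pderiv_X_of_ne (hi b).symm, mul_zero]

/-- The vector field with coefficients `G t` applied to the linear forms `K s` gives the coordinate `t_b`,
because `G K = 1`. -/
theorem vf_lin {n : ℕ} (K G : Matrix (Fin n) (Fin n) ℝ) {s : Fin n → Fin n ⊕ Fin n}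
    (hs : Function.Injective s) (t) (hKG : G * K = 1) (b : Fin n) :
    vf s (lin G t) (lin K s b) = X (t b) := by
  have h1 : vf s (lin G t) (lin K s b) = ∑ a, ∑ c, C (G c a * K a b) * X (t c) := by
    rw [lin, map_sum]
    refine Finset.sum_congr rfl fun a _ => ?_
    rw [dC_mul, vf_X_self hs, lin, Finset.mul_sum]
    refine Finset.sum_congr rfl fun c _ => ?_
    rw [C_mul]; ring
  rw [h1, Finset.sum_comm]
  have h2 : ∀ c, ∑ a, C (G c a * K a b) * X (t c) = C ((1 : Matrix (Fin n) (Fin n) ℝ) c b) * (X (t c) : PS n) := by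
    intro c
    rw [← hKG, Matrix.mul_apply, map_sum, Finset.sum_mul]
  simp_rw [h2, Matrix.one_apply]
  rw [Finset.sum_eq_single b] <;> simp +contextual

/-- The first-order parts of `e` and `f` satisfy `[e₀, f₀] = h`. -/
theorem vf_comm {n : ℕ} {K G : Matrix (Fin n) (Fin n) ℝ} (hGK : G * K = 1) (hKG : K * G = 1)
    (p : PS n) :
    vf Sum.inl (lin G Sum.inr) (vf Sum.inr (lin K Sum.inl) p) =
      vf Sum.inr (lin K Sum.inl) (vf Sum.inl (lin G Sum.inr) p) + hD n p := by
  have : ⁅vf Sum.inl (lin G Sum.inr), vf Sum.inr (lin K Sum.inl)⁆ = hD n := by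
    refine derivation_ext fun i => ?_
    rw [Derivation.commutator_apply, hD, Derivation.sub_apply]
    rcases i with b | b
    · rw [vf_X_self Sum.inl_injective, vf_X_self Sum.inl_injective, vf_X_ne (s := Sum.inr) _ _ (by simp),
        vf_X_ne (s := Sum.inr) _ _ (by simp), vf_lin _ _ Sum.inr_injective _ hKG, Derivation.map_zero]
    · rw [vf_X_self Sum.inr_injective, vf_X_self Sum.inr_injective, vf_X_ne (s := Sum.inl) _ _ (by simp),
        vf_X_ne (s := Sum.inl) _ _ (by simp), vf_lin _ _ Sum.inl_injective _ hGK, Derivation.map_zero]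
  rw [← this, Derivation.commutator_apply]; abel

/-- The commutator `[∂_{t a}, ∑ K_{cb} t_c ∂_{s b}] = ∑_b K_{ab} ∂_{s b}`. The hypotheses say that the
variables are the disjoint union of the `s a` and the `t a`. -/
theorem pderiv_vf_comm {n : ℕ} (K : Matrix (Fin n) (Fin n) ℝ) {s t : Fin n → Fin n ⊕ Fin n}
    (hs : Function.Injective s) (ht : Function.Injective t) (hst : ∀ i, (∃ a, i = s a) ∨ (∃ a, i = t a))
    (hst' : ∀ a b, s a ≠ t b) (a : Fin n) (p : PS n) :
    pderiv (t a) (vf s (lin K t) p) = vf s (lin K t) (pderiv (t a) p) + ∑ b, K a b • pderiv (s b) p := by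
  classical
  have h0 : ⁅(pderiv (t a) : Derivation ℝ (PS n) (PS n)), vf s (lin K t)⁆ = vf s (fun b => C (K a b)) := by
    refine derivation_ext fun i => ?_
    rw [Derivation.commutator_apply]
    rcases hst i with ⟨b, rfl⟩ | ⟨b, rfl⟩
    · rw [vf_X_self hs, vf_X_self hs, pderiv_X_of_ne (hst' b a), Derivation.map_zero, sub_zero, lin, map_sum,
        Finset.sum_eq_single a]
      · simp
      · intro c _ hc
        rw [pderiv_C_mul, pderiv_X_of_ne (fun h => hc (ht h)), mul_zero]
      · simp
    · rw [vf_X_ne _ _ (fun c => hst' c b), vf_X_ne _ _ (fun c => hst' c b), Derivation.map_zero, pderiv_X,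
        zero_sub, neg_eq_zero, Pi.single_apply]
      split_ifs <;> simp
  have h1 := congrArg (fun D => D p) h0
  simp only [Derivation.commutator_apply, vf_apply _ (fun b => C (K a b))] at h1
  simp_rw [smul_eq_C_mul, ← h1]; abel

theorem pderiv_hD {n : ℕ} (p : PS n) (a : Fin n) :
    pderiv (Sum.inl a) (hD n p) = hD n (pderiv (Sum.inl a) p) - pderiv (Sum.inl a) p ∧
    pderiv (Sum.inr a) (hD n p) = hD n (pderiv (Sum.inr a) p) + pderiv (Sum.inr a) p := by
  classical
  have hX : (∀ b, hD n (X (Sum.inl b)) = - X (Sum.inl b)) ∧ ∀ b, hD n (X (Sum.inr b)) = X (Sum.inr b) := by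
    refine ⟨fun b => ?_, fun b => ?_⟩ <;> rw [hD, Derivation.sub_apply]
    · rw [vf_X_self Sum.inl_injective, vf_X_ne (s := Sum.inr) _ _ (by simp), zero_sub]
    · rw [vf_X_self Sum.inr_injective, vf_X_ne (s := Sum.inl) _ _ (by simp), sub_zero]
  have h1 : ⁅(pderiv (Sum.inl a) : Derivation ℝ (PS n) (PS n)), hD n⁆ = -pderiv (Sum.inl a) := by
    refine derivation_ext fun i => ?_
    rw [Derivation.commutator_apply]
    rcases i with b | b
    · rw [hX.1]; simp [Pi.single_apply]; split_ifs <;> simp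
    · rw [hX.2]; simp
  have h2 : ⁅(pderiv (Sum.inr a) : Derivation ℝ (PS n) (PS n)), hD n⁆ = pderiv (Sum.inr a) := by
    refine derivation_ext fun i => ?_
    rw [Derivation.commutator_apply]
    rcases i with b | b
    · rw [hX.1]; simp
    · rw [hX.2]; simp [Pi.single_apply]; split_ifs <;> simp
  have h1' := congrArg (fun D => D p) h1
  have h2' := congrArg (fun D => D p) h2
  simp only [Derivation.commutator_apply, Derivation.neg_apply] at h1' h2'
  exact ⟨by rw [sub_eq_add_neg, ← h1']; abel, by rw [← sub_eq_iff_eq_add', h2']⟩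

theorem hD_vf {n : ℕ} (K : Matrix (Fin n) (Fin n) ℝ) (p : PS n) :
    hD n (vf Sum.inl (lin K Sum.inr) p) = vf Sum.inl (lin K Sum.inr) (hD n p) + (2 : ℝ) • vf Sum.inl (lin K Sum.inr) p ∧
    hD n (vf Sum.inr (lin K Sum.inl) p) = vf Sum.inr (lin K Sum.inl) (hD n p) - (2 : ℝ) • vf Sum.inr (lin K Sum.inl) p := by
  have hX : (∀ b, hD n (X (Sum.inl b)) = - X (Sum.inl b)) ∧ ∀ b, hD n (X (Sum.inr b)) = X (Sum.inr b) := by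
    refine ⟨fun b => ?_, fun b => ?_⟩ <;> rw [hD, Derivation.sub_apply]
    · rw [vf_X_self Sum.inl_injective, vf_X_ne (s := Sum.inr) _ _ (by simp), zero_sub]
    · rw [vf_X_self Sum.inr_injective, vf_X_ne (s := Sum.inl) _ _ (by simp), sub_zero]
  have hl : ∀ b, hD n (lin K Sum.inl b) = - lin K Sum.inl b := fun b => by
    rw [lin, map_sum, ← Finset.sum_neg_distrib]
    exact Finset.sum_congr rfl fun a _ => by rw [dC_mul, hX.1, mul_neg]
  have hr : ∀ b, hD n (lin K Sum.inr b) = lin K Sum.inr b := fun b => by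
    rw [lin, map_sum]
    exact Finset.sum_congr rfl fun a _ => by rw [dC_mul, hX.2]
  have h1 : ⁅hD n, vf Sum.inl (lin K Sum.inr)⁆ = (2 : ℝ) • vf Sum.inl (lin K Sum.inr) := by
    refine derivation_ext fun i => ?_
    rw [Derivation.commutator_apply, Derivation.smul_apply]
    rcases i with b | b
    · rw [hX.1, map_neg, vf_X_self Sum.inl_injective, hr, two_smul]; abel
    · rw [hX.2, vf_X_ne (s := Sum.inl) _ _ (by simp)]; simp
  have h2 : ⁅hD n, vf Sum.inr (lin K Sum.inl)⁆ = (-2 : ℝ) • vf Sum.inr (lin K Sum.inl) := by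
    refine derivation_ext fun i => ?_
    rw [Derivation.commutator_apply, Derivation.smul_apply]
    rcases i with b | b
    · rw [hX.1, map_neg, vf_X_ne (s := Sum.inr) _ _ (by simp)]; simp
    · rw [hX.2, vf_X_self Sum.inr_injective, hl, neg_smul, two_smul]; abel
  have h1' := congrArg (fun D => D p) h1
  have h2' := congrArg (fun D => D p) h2
  simp only [Derivation.commutator_apply, Derivation.smul_apply] at h1' h2'
  exact ⟨by rw [← h1']; abel, by rw [sub_eq_add_neg, ← neg_smul, ← h2']; abel⟩

theorem pderiv_comm' {n : ℕ} (i j : Fin n ⊕ Fin n) (p : PS n) : pderiv i (pderiv j p) = pderiv j (pderiv i p) := by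
  classical
  have : ⁅(pderiv i : Derivation ℝ (PS n) (PS n)),
      (pderiv j : Derivation ℝ (PS n) (PS n))⁆ = 0 := by
    refine derivation_ext fun k => ?_
    rw [Derivation.commutator_apply, pderiv_X, pderiv_X, Pi.single_apply, Pi.single_apply]
    split_ifs <;> simp
  have := congrArg (fun D => D p) this
  simpa [Derivation.commutator_apply, sub_eq_zero] using this

/-- The commutator of the second-order part of one of `e`, `f` with the first-order part of the other is
`2 ∑_a ∂_{s a} ∂_{t a}`, which is symmetric in `s` and `t`; hence these contributions cancel in `[e, f]`. -/
theorem lap2_vf {n : ℕ} {K G : Matrix (Fin n) (Fin n) ℝ} {s t : Fin n → Fin n ⊕ Fin n}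
    (hs : Function.Injective s) (ht : Function.Injective t) (hst : ∀ i, (∃ a, i = s a) ∨ (∃ a, i = t a))
    (hst' : ∀ a b, s a ≠ t b) (hG : G.IsSymm) (hGK : G * K = 1) (p : PS n) :
    lap2 G t (vf s (lin K t) p) = vf s (lin K t) (lap2 G t p) + (2 : ℝ) • ∑ a, pderiv (s a) (pderiv (t a) p) := by
  have hcomm := pderiv_vf_comm K hs ht hst hst'
  have e1 : ∀ q : Fin n → PS n, ∀ a, ∑ b, ∑ c, (G a b * K b c) • q c = q a := by
    intro q a
    rw [Finset.sum_comm]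
    simp_rw [← Finset.sum_smul, ← Matrix.mul_apply, hGK, Matrix.one_apply]
    simp
  rw [lap2_apply, lap2_apply, map_sum]
  simp_rw [map_sum, Derivation.map_smul, hcomm, map_add, hcomm, map_sum, Derivation.map_smul, smul_add,
    Finset.sum_add_distrib, Finset.smul_sum, smul_smul]
  rw [add_assoc]
  congr 1
  have h1 : ∑ a, ∑ b, ∑ c, (G a b * K a c) • pderiv (s c) (pderiv (t b) p) = ∑ a, pderiv (s a) (pderiv (t a) p) := by
    rw [Finset.sum_comm]
    refine Finset.sum_congr rfl fun b _ => ?_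
    rw [← e1 (fun c => pderiv (s c) (pderiv (t b) p)) b]
    refine Finset.sum_congr rfl fun a _ => Finset.sum_congr rfl fun c _ => ?_
    rw [hG.apply a b]
  have h2 : ∑ a, ∑ b, ∑ c, (G a b * K b c) • pderiv (t a) (pderiv (s c) p) = ∑ a, pderiv (s a) (pderiv (t a) p) := by
    refine Finset.sum_congr rfl fun a _ => ?_
    rw [e1 (fun c => pderiv (t a) (pderiv (s c) p)) a, pderiv_comm']
  rw [h1, h2, ← Finset.smul_sum, two_smul]

theorem lap2_comm {n : ℕ} (K G : Matrix (Fin n) (Fin n) ℝ) (s t : Fin n → Fin n ⊕ Fin n) (p : PS n) :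
    lap2 G t (lap2 K s p) = lap2 K s (lap2 G t p) := by
  simp_rw [lap2_apply, map_sum, Derivation.map_smul, Finset.smul_sum]
  have hd : ∀ a b c d : Fin n, pderiv (t a) (pderiv (t b) (pderiv (s c) (pderiv (s d) p))) =
      pderiv (s c) (pderiv (s d) (pderiv (t a) (pderiv (t b) p))) := by
    intro a b c d
    rw [pderiv_comm' (t b) (s c), pderiv_comm' (t b) (s d), pderiv_comm' (t a) (s c), pderiv_comm' (t a) (s d)]
  simp_rw [hd]
  have : ∀ F : Fin n → Fin n → Fin n → Fin n → PS n, ∑ a, ∑ b, ∑ c, ∑ d, F a b c d = ∑ c, ∑ d, ∑ a, ∑ b, F a b c d := by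
    intro F
    have h : ∑ x : Fin n × Fin n, ∑ y : Fin n × Fin n, F x.1 x.2 y.1 y.2 =
      ∑ y : Fin n × Fin n, ∑ x : Fin n × Fin n, F x.1 x.2 y.1 y.2 := Finset.sum_comm
    simpa only [Fintype.sum_prod_type] using h
  rw [this]
  refine Finset.sum_congr rfl fun _ _ => Finset.sum_congr rfl fun _ _ => Finset.sum_congr rfl fun _ _ => Finset.sum_congr rfl fun _ _ => ?_
  rw [smul_comm]

theorem hD_lap2 {n : ℕ} (K : Matrix (Fin n) (Fin n) ℝ) (p : PS n) :
    hD n (lap2 K Sum.inl p) = lap2 K Sum.inl (hD n p) + (2 : ℝ) • lap2 K Sum.inl p ∧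
    hD n (lap2 K Sum.inr p) = lap2 K Sum.inr (hD n p) - (2 : ℝ) • lap2 K Sum.inr p := by
  simp_rw [lap2_apply, (pderiv_hD _ _).1, (pderiv_hD _ _).2, map_sub, map_add, (pderiv_hD _ _).1, (pderiv_hD _ _).2,
    map_sum, Derivation.map_smul, Finset.smul_sum, ← Finset.sum_add_distrib, ← Finset.sum_sub_distrib]
  exact ⟨Finset.sum_congr rfl fun _ _ => Finset.sum_congr rfl fun _ _ => by module,
    Finset.sum_congr rfl fun _ _ => Finset.sum_congr rfl fun _ _ => by module⟩

/-- The relation `[h, e] = 2e`. -/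
theorem rel_he {n : ℕ} (G : Matrix (Fin n) (Fin n) ℝ) (p : PS n) :
    hD n (raise G Sum.inl Sum.inr p) = raise G Sum.inl Sum.inr (hD n p) + (2 : ℝ) • raise G Sum.inl Sum.inr p := by
  rw [raise_apply, raise_apply, map_add, Derivation.map_smul, (hD_vf G p).1, (hD_lap2 G p).1]
  module

/-- The relation `[h, f] = -2f`. -/
theorem rel_hf {n : ℕ} (G : Matrix (Fin n) (Fin n) ℝ) (p : PS n) :
    hD n (raise G Sum.inr Sum.inl p) = raise G Sum.inr Sum.inl (hD n p) - (2 : ℝ) • raise G Sum.inr Sum.inl p := by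
  rw [raise_apply, raise_apply, map_add, Derivation.map_smul, (hD_vf G p).2, (hD_lap2 G p).2]
  module

/-- The relation `[e, f] = h`. -/
theorem rel_ef {n : ℕ} {K G : Matrix (Fin n) (Fin n) ℝ} (hG : G.IsSymm) (hK : K.IsSymm) (hGK : G * K = 1) (hKG : K * G = 1) (p : PS n) :
    raise G Sum.inl Sum.inr (raise K Sum.inr Sum.inl p) =
      raise K Sum.inr Sum.inl (raise G Sum.inl Sum.inr p) + hD n p := by
  have h1 := lap2_vf (s := Sum.inr) (t := Sum.inl) Sum.inr_injective Sum.inl_injective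
    (by rintro (i | i) <;> simp) (by simp) hG hGK p
  have h2 := lap2_vf (s := Sum.inl) (t := Sum.inr) Sum.inl_injective Sum.inr_injective
    (by rintro (i | i) <;> simp) (by simp) hK hKG p
  have h3 : ∑ a, pderiv (Sum.inr a) (pderiv (Sum.inl a) p) = ∑ a, pderiv (Sum.inl a) (pderiv (Sum.inr a) p) :=
    Finset.sum_congr rfl fun _ _ => pderiv_comm' _ _ _
  rw [h3] at h1
  simp only [raise_apply, map_add, map_smul]
  rw [vf_comm hGK hKG, h1, h2, lap2_comm]
  module

end Sym
end

/-! ### The kernel of `e` and its dimension -/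

noncomputable section
namespace Sym
open MvPolynomial

/-- Degree of an exponent vector in the variables `s a`. -/
def dg {n : ℕ} (s : Fin n → Fin n ⊕ Fin n) (α : (Fin n ⊕ Fin n) →₀ ℕ) : ℕ := ∑ a, α (s a)

theorem dg_add {n : ℕ} (s : Fin n → Fin n ⊕ Fin n) (α β : (Fin n ⊕ Fin n) →₀ ℕ) :
    dg s (α + β) = dg s α + dg s β := by
  simp [dg, Finset.sum_add_distrib]

theorem dg_single {n : ℕ} {s : Fin n → Fin n ⊕ Fin n} (hs : Function.Injective s) (a : Fin n) :
    dg s (Finsupp.single (s a) 1) = 1 := by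
  classical
  rw [dg, Finset.sum_eq_single a]
  · simp
  · intro b _ hb
    rw [Finsupp.single_apply, if_neg (fun h => hb (hs h).symm)]
  · simp

theorem dg_single_ne {n : ℕ} {s : Fin n → Fin n ⊕ Fin n} (i) (hi : ∀ a, s a ≠ i) :
    dg s (Finsupp.single i 1) = 0 := by
  classical
  exact Finset.sum_eq_zero fun b _ => by rw [Finsupp.single_apply, if_neg (hi b).symm]

/-- The polynomials of degree at most `k` in the variables `s a`. -/
def Sd {n : ℕ} (s : Fin n → Fin n ⊕ Fin n) (k : ℕ) : Submodule ℝ (PS n) :=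
  restrictSupport ℝ {α | dg s α ≤ k}

theorem mem_rs {n : ℕ} {A : Set ((Fin n ⊕ Fin n) →₀ ℕ)} {p : PS n} :
    p ∈ restrictSupport ℝ A ↔ ∀ α, coeff α p ≠ 0 → α ∈ A := by
  rw [mem_restrictSupport_iff]
  simp [Set.subset_def]

theorem mem_Sd {n : ℕ} {s : Fin n → Fin n ⊕ Fin n} {k : ℕ} {p : PS n} :
    p ∈ Sd s k ↔ ∀ α, coeff α p ≠ 0 → dg s α ≤ k := mem_rs

theorem Sd_mono {n : ℕ} {s : Fin n → Fin n ⊕ Fin n} {k m : ℕ} (h : k ≤ m) : Sd (n := n) s k ≤ Sd s m :=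
  restrictSupport_mono _ fun _ hα => le_trans hα h

theorem Sd_X_mul {n : ℕ} {s : Fin n → Fin n ⊕ Fin n} {k d : ℕ} {p : PS n} (hp : p ∈ Sd s k) (i)
    (hi : dg s (Finsupp.single i 1) ≤ d) : X i * p ∈ Sd s (k + d) := by
  classical
  rw [mem_Sd] at *
  intro α hα
  rw [coeff_X_mul'] at hα
  split_ifs at hα with h
  · have h1 := hp _ hα
    have h2 : α = (α - Finsupp.single i 1) + Finsupp.single i 1 := by
      ext j
      by_cases hj : j = i
      · subst hj
        have : α j ≠ 0 := Finsupp.mem_support_iff.mp h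
        simp; omega
      · simp [Ne.symm hj]
    rw [h2, dg_add]; omega
  · exact absurd rfl hα

theorem Sd_pderiv {n : ℕ} {s : Fin n → Fin n ⊕ Fin n} {k : ℕ} {p : PS n} (hp : p ∈ Sd s k) (i) :
    pderiv i p ∈ Sd s k := by
  rw [mem_Sd] at *
  intro α hα
  rw [coeff_pderiv] at hα
  have := hp _ (left_ne_zero_of_mul hα)
  rw [dg_add] at this; omega

theorem Sd_pderiv_succ {n : ℕ} {s : Fin n → Fin n ⊕ Fin n} (hs : Function.Injective s) {k : ℕ} {p : PS n}
    (hp : p ∈ Sd s (k + 1)) (a) : pderiv (s a) p ∈ Sd s k := by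
  rw [mem_Sd] at *
  intro α hα
  rw [coeff_pderiv] at hα
  have := hp _ (left_ne_zero_of_mul hα)
  rw [dg_add, dg_single hs] at this; omega

theorem pderiv_Sd_zero {n : ℕ} {s : Fin n → Fin n ⊕ Fin n} (hs : Function.Injective s) {p : PS n}
    (hp : p ∈ Sd s 0) (a) : pderiv (s a) p = 0 := by
  rw [mem_Sd] at hp
  ext α
  rw [coeff_pderiv, coeff_zero]
  by_contra hα
  have := hp _ (left_ne_zero_of_mul hα)
  rw [dg_add, dg_single hs] at this; omega

theorem raise_Sd_succ {n : ℕ} (K : Matrix (Fin n) (Fin n) ℝ) {s t : Fin n → Fin n ⊕ Fin n}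
    (hs : Function.Injective s) (hst : ∀ a b, s a ≠ t b) (k : ℕ) (p : PS n)
    (hp : p ∈ Sd s (k + 1)) : raise K s t p ∈ Sd s k := by
  rw [raise_apply, vf_apply, lap2_apply]
  refine add_mem (sum_mem fun b _ => ?_) (Submodule.smul_mem _ _ (sum_mem fun a _ => sum_mem fun b _ =>
    Submodule.smul_mem _ _ (Sd_pderiv (Sd_pderiv_succ hs hp _) _)))
  rw [lin, Finset.sum_mul]
  refine sum_mem fun a _ => ?_
  rw [mul_assoc, ← smul_eq_C_mul]
  exact Submodule.smul_mem _ _ (Sd_X_mul (d := 0) (Sd_pderiv_succ hs hp _) _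
    (dg_single_ne _ fun b => hst b a).le)

theorem raise_Sd_zero {n : ℕ} (K : Matrix (Fin n) (Fin n) ℝ) {s t : Fin n → Fin n ⊕ Fin n}
    (hs : Function.Injective s) (p : PS n)
    (hp : p ∈ Sd s 0) : raise K s t p = 0 := by
  rw [raise_apply, vf_apply, lap2_apply]
  simp [pderiv_Sd_zero hs hp]

theorem raise_Sd_up {n : ℕ} (K : Matrix (Fin n) (Fin n) ℝ) {s t : Fin n → Fin n ⊕ Fin n}
    (ht : Function.Injective t) (k : ℕ) (p : PS n)
    (hp : p ∈ Sd t k) : raise K s t p ∈ Sd t (k + 1) := by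
  rw [raise_apply, vf_apply, lap2_apply]
  refine add_mem (sum_mem fun b _ => ?_) (Submodule.smul_mem _ _ (sum_mem fun a _ => sum_mem fun b _ =>
    Submodule.smul_mem _ _ (Sd_mono (Nat.le_succ k) (Sd_pderiv (Sd_pderiv hp _) _))))
  rw [lin, Finset.sum_mul]
  refine sum_mem fun a _ => ?_
  rw [mul_assoc, ← smul_eq_C_mul]
  exact Submodule.smul_mem _ _ (Sd_X_mul (Sd_pderiv hp _) _ (dg_single ht a).le)

/-- An operator `raise K s t` lowers the degree in the variables `s`, hence is locally nilpotent. -/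
theorem raise_pow_Sd {n : ℕ} (K : Matrix (Fin n) (Fin n) ℝ) {s t : Fin n → Fin n ⊕ Fin n}
    (hs : Function.Injective s) (hst : ∀ a b, s a ≠ t b) (k : ℕ) (p : PS n)
    (hp : p ∈ Sd s k) : (raise K s t ^ (k + 1)) p = 0 := by
  induction k generalizing p with
  | zero => simpa using raise_Sd_zero K hs p hp
  | succ k ih =>
    rw [pow_succ, Module.End.mul_apply]
    exact ih _ (raise_Sd_succ K hs hst k p hp)

theorem hD_monomial {n : ℕ} (α : (Fin n ⊕ Fin n) →₀ ℕ) (r : ℝ) :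
    hD n (monomial α r) = ((dg Sum.inr α : ℝ) - dg Sum.inl α) • monomial α r := by
  rw [hD, Derivation.sub_apply, vf_apply, vf_apply]
  simp_rw [X_mul_pderiv_monomial]
  rw [← Finset.sum_smul, ← Finset.sum_smul, sub_smul]
  simp only [dg, Nat.cast_smul_eq_nsmul]

theorem coeff_hD {n : ℕ} (α : (Fin n ⊕ Fin n) →₀ ℕ) (p : PS n) :
    coeff α (hD n p) = ((dg Sum.inr α : ℝ) - dg Sum.inl α) * coeff α p := by
  classical
  induction p using MvPolynomial.induction_on' with
  | monomial β r =>
    rw [hD_monomial, coeff_smul, coeff_monomial]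
    split_ifs with h
    · rw [h]; rfl
    · simp
  | add p q hp hq => rw [map_add, coeff_add, coeff_add, hp, hq]; ring

/-- The exponents with `deg_x ≤ deg_ξ ≤ ℓ`, i.e. of nonnegative weight and degree at most `ℓ` in `ξ`. -/
def AA (n ℓ : ℕ) : Set ((Fin n ⊕ Fin n) →₀ ℕ) :=
  {α | dg Sum.inl α ≤ dg Sum.inr α ∧ dg Sum.inr α ≤ ℓ}

/-- The exponents with `deg_x + 2 ≤ deg_ξ ≤ ℓ + 1`: the possible exponents of `e` applied to a monomial
with exponent in `AA n ℓ`. -/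
def BB (n ℓ : ℕ) : Set ((Fin n ⊕ Fin n) →₀ ℕ) :=
  {α | dg Sum.inl α + 2 ≤ dg Sum.inr α ∧ dg Sum.inr α ≤ ℓ + 1}

/-- The polynomial symbols of degree at most `ℓ` in `ξ` annihilated by `e`. -/
def KK {n : ℕ} (G : Matrix (Fin n) (Fin n) ℝ) (ℓ : ℕ) : Submodule ℝ (PS n) :=
  LinearMap.ker (raise G Sum.inl Sum.inr) ⊓ Sd Sum.inr ℓ

variable {n : ℕ} {K G : Matrix (Fin n) (Fin n) ℝ}

/-- The kernel of `e` has no negative weights: if `e p = 0` and `deg_ξ p ≤ ℓ`, then `f^{ℓ+1} p = 0`, so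
reading off a coefficient of weight `w` in `e^{ℓ+1} f^{ℓ+1} p` gives `w (w-1) ⋯ (w-ℓ) = 0` whenever that
coefficient of `p` is nonzero. -/
theorem KK_le (hG : G.IsSymm) (hK : K.IsSymm) (hGK : G * K = 1) (hKG : K * G = 1) (ℓ : ℕ) :
    KK G ℓ ≤ restrictSupport ℝ (AA n ℓ) := by
  rintro p ⟨hp, hpS⟩
  replace hp : raise G Sum.inl Sum.inr p = 0 := hp
  rw [mem_rs]
  intro α hα
  have hℓ := mem_Sd.mp hpS α hα
  refine ⟨?_, hℓ⟩
  have h0 := raise_pow_Sd K (s := Sum.inr) (t := Sum.inl) Sum.inr_injective (by simp) ℓ p hpS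
  have key := sl2_e_pow_f_pow_functional (h := (hD n).toLinearMap) (rel_ef hG hK hGK hKG) (rel_hf K)
    (rel_he G) (lcoeff ℝ α) _ (coeff_hD α) (ℓ + 1) p hp
  rw [h0, LinearMap.map_zero, LinearMap.map_zero, eq_comm, mul_eq_zero] at key
  replace key := key.resolve_right hα
  rw [mul_eq_zero, Finset.prod_eq_zero_iff] at key
  obtain ⟨i, -, hi⟩ := key.resolve_left (by positivity)
  have : (dg Sum.inr α : ℝ) = dg Sum.inl α + i := by linarith
  have : dg Sum.inr α = dg Sum.inl α + i := by exact_mod_cast this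
  omega

/-- `e` maps the span of the monomials in `AA n ℓ` onto the span of those in `BB n ℓ`; surjectivity
is `sl2_lift`, as the monomials in `BB n ℓ` have weight at least `2`. -/
theorem range_eq (hG : G.IsSymm) (hK : K.IsSymm) (hGK : G * K = 1) (hKG : K * G = 1) (ℓ : ℕ) :
    LinearMap.range ((raise G Sum.inl Sum.inr).domRestrict (restrictSupport ℝ (AA n ℓ))) =
      restrictSupport ℝ (BB n ℓ) := by
  rw [LinearMap.range_domRestrict]
  apply le_antisymm
  · rw [restrictSupport_eq_span, Submodule.map_span_le]
    rintro _ ⟨α, ⟨hα1, hα2⟩, rfl⟩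
    have h1 : (monomial α 1 : PS n) ∈ Sd Sum.inr ℓ := (monomial_mem_restrictSupport ..).mpr (Or.inl hα2)
    have h2 := raise_Sd_up G (s := Sum.inl) Sum.inr_injective _ _ h1
    have h3 := rel_he G (monomial α 1)
    rw [hD_monomial, map_smul] at h3
    simp only
    rw [mem_rs]
    intro β hβ
    refine ⟨?_, mem_Sd.mp h2 β hβ⟩
    have h4 := congrArg (coeff β) h3
    rw [coeff_hD, coeff_add, coeff_smul, coeff_smul, smul_eq_mul, smul_eq_mul, ← add_mul] at h4
    have h5 := mul_right_cancel₀ hβ h4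
    have h6 : (dg Sum.inr β : ℝ) + dg Sum.inl α = dg Sum.inr α + 2 + dg Sum.inl β := by linarith
    have h7 : dg Sum.inr β + dg Sum.inl α = dg Sum.inr α + 2 + dg Sum.inl β := by exact_mod_cast h6
    omega
  · rw [restrictSupport_eq_span ℝ (BB n ℓ), Submodule.span_le]
    rintro _ ⟨α, ⟨hα1, hα2⟩, rfl⟩
    have h1 : (monomial α 1 : PS n) ∈ Sd Sum.inr (ℓ + 1) := (monomial_mem_restrictSupport ..).mpr (Or.inl hα2)
    have h2 : (monomial α 1 : PS n) ∈ Sd Sum.inl (dg Sum.inl α) :=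
      (monomial_mem_restrictSupport ..).mpr (Or.inl (le_refl (dg Sum.inl α)))
    have h3 := raise_pow_Sd G (s := Sum.inl) (t := Sum.inr) Sum.inl_injective (by simp) _ _ h2
    obtain ⟨u, huS, huh, hue⟩ := sl2_lift (h := (hD n).toLinearMap) (rel_ef hG hK hGK hKG) (rel_hf K)
      (rel_he G) (Sd Sum.inr) (raise_Sd_up G Sum.inr_injective)
      (raise_Sd_succ K Sum.inr_injective (by simp)) ℓ (dg Sum.inr α - dg Sum.inl α) (by omega)
      _ (monomial α 1) (by
        rw [Nat.cast_sub (by omega)]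
        exact hD_monomial α 1) h1 h3
    refine ⟨u, ?_, hue⟩
    rw [SetLike.mem_coe, mem_rs]
    intro β hβ
    refine ⟨?_, mem_Sd.mp huS β hβ⟩
    have h4 := congrArg (coeff β) huh
    rw [Derivation.coeFn_coe, coeff_hD, coeff_smul, smul_eq_mul, Nat.cast_sub (by omega)] at h4
    have h5 := mul_right_cancel₀ hβ h4
    have h6 : (dg Sum.inr β : ℝ) + dg Sum.inl α + 2 = dg Sum.inr α + dg Sum.inl β := by linarith
    have h7 : dg Sum.inr β + dg Sum.inl α + 2 = dg Sum.inr α + dg Sum.inl β := by exact_mod_cast h6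
    omega

/-- The exponents of degree `k` in `n` variables. -/
def TT (n k : ℕ) : Finset (Fin n →₀ ℕ) := Finset.finsuppAntidiag Finset.univ k

theorem mem_TT {n k : ℕ} {β : Fin n →₀ ℕ} : β ∈ TT n k ↔ ∑ a, β a = k := by
  simp [TT, Finset.mem_finsuppAntidiag]

theorem card_TT (n k : ℕ) : (TT n k).card = (n + k - 1).choose k := by
  simp [TT, Finset.card_finsuppAntidiag_nat_eq_choose]

theorem disj_TT (n : ℕ) (s : Set ℕ) : s.PairwiseDisjoint (TT n) := by
  intro i _ j _ hij
  refine Finset.disjoint_left.mpr fun β h1 h2 => hij ?_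
  rw [← mem_TT.mp h1, mem_TT.mp h2]

/-- The number of exponents of degree less than `k`. -/
theorem card_TT_le (n : ℕ) (hn : 0 < n) (k : ℕ) : ((Finset.range k).biUnion (TT n)).card = (n + k - 1).choose n := by
  rw [Finset.card_biUnion (disj_TT n _)]
  simp_rw [card_TT]
  induction k with
  | zero => simp [Nat.choose_eq_zero_of_lt (show n - 1 < n by omega)]
  | succ k ih =>
    rw [Finset.sum_range_succ, ih]
    obtain ⟨m, rfl⟩ : ∃ m, n = m + 1 := ⟨n - 1, by omega⟩
    rw [show m + 1 + (k + 1) - 1 = m + k + 1 by omega, show m + 1 + k - 1 = m + k by omega,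
      Nat.choose_succ_succ, Nat.choose_symm_add, add_comm]

/-- The number of pairs `(β, γ)` for which some `i ≤ ℓ` satisfies `|γ| = v i` and `|β| < u i`. -/
theorem card_pairs (n : ℕ) (hn : 0 < n) (ℓ : ℕ) (u v : ℕ → ℕ) (hv : Function.Injective v) :
    ((Finset.range (ℓ + 1)).biUnion fun i => ((Finset.range (u i)).biUnion (TT n)) ×ˢ TT n (v i)).card =
      ∑ i ∈ Finset.range (ℓ + 1), (n + u i - 1).choose n * (n + v i - 1).choose (v i) := by
  rw [Finset.card_biUnion]
  · simp_rw [Finset.card_product, card_TT_le n hn, card_TT]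
  · intro i _ j _ hij
    refine Finset.disjoint_left.mpr fun β h1 h2 => hij (hv ?_)
    rw [← mem_TT.mp (Finset.mem_product.mp h1).2, mem_TT.mp (Finset.mem_product.mp h2).2]

/-- The dimension of a space of polynomials in `(x, ξ)` spanned by monomials, as a number of pairs of
exponents. -/
theorem finrank_rs (A : Set ((Fin n ⊕ Fin n) →₀ ℕ)) (P : Finset ((Fin n →₀ ℕ) × (Fin n →₀ ℕ)))
    (h : ∀ α, α ∈ A ↔ Finsupp.sumFinsuppEquivProdFinsupp α ∈ P) :
    Module.finrank ℝ (restrictSupport ℝ A) = P.card ∧ Module.Finite ℝ (restrictSupport ℝ A) := by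
  have e : A ≃ P := Finsupp.sumFinsuppEquivProdFinsupp.subtypeEquiv h
  have : Finite A := Finite.of_equiv _ e.symm
  constructor
  · rw [Module.finrank_eq_nat_card_basis (basisRestrictSupport ℝ A), Nat.card_congr e]
    simp
  · exact Module.Finite.of_basis (basisRestrictSupport ℝ A)

theorem finrank_AA (n : ℕ) (hn : 0 < n) (ℓ : ℕ) :
    Module.finrank ℝ (restrictSupport ℝ (AA n ℓ)) =
      ∑ i ∈ Finset.range (ℓ + 1), (n + i).choose n * (n + i - 1).choose i ∧
    Module.Finite ℝ (restrictSupport ℝ (AA n ℓ)) := by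
  have h := card_pairs n hn ℓ (fun i => i + 1) id Function.injective_id
  simp only [id, ← add_assoc, Nat.add_sub_cancel] at h
  rw [← h]
  refine finrank_rs _ _ fun α => ?_
  simp [AA, dg, mem_TT, Finsupp.sumFinsuppEquivProdFinsupp]
  constructor
  · rintro ⟨h1, h2⟩; refine ⟨h2, ?_⟩; omega
  · rintro ⟨h1, h2⟩; omega

theorem finrank_BB (n : ℕ) (hn : 0 < n) (ℓ : ℕ) :
    Module.finrank ℝ (restrictSupport ℝ (BB n ℓ)) =
      ∑ i ∈ Finset.range (ℓ + 1), (n + i - 1).choose n * (n + i).choose (i + 1) := by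
  have h := card_pairs n hn ℓ (fun i => i) (fun i => i + 1) (add_left_injective 1)
  simp only [← add_assoc, Nat.add_sub_cancel] at h
  rw [← h]
  refine (finrank_rs _ _ fun α => ?_).1
  simp [BB, dg, mem_TT, Finsupp.sumFinsuppEquivProdFinsupp]
  constructor
  · rintro ⟨h1, h2⟩
    exact ⟨_, by omega, by omega, (Nat.sub_add_cancel (by omega)).symm⟩
  · rintro ⟨i, h1, h2, h3⟩; omega

/-- The `i`-th summands of the cardinalities of `AA n ℓ` and `BB n ℓ` differ by `dim 𝒦_i`. -/
theorem binom_id (n : ℕ) (hn : 0 < n) (i : ℕ) :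
    (1 / (n : ℚ)) * ((n + i).choose (i + 1) : ℚ) * ((n + i - 1).choose i : ℚ) =
      (n + i).choose n * (n + i - 1).choose i - (n + i - 1).choose n * (n + i).choose (i + 1) := by
  have h1 : (n + i).choose n * n = (n + i).choose (i + 1) * (i + 1) := by
    have := Nat.choose_succ_right_eq (n + i) i
    rw [this, Nat.add_sub_cancel, Nat.choose_symm_add]
  have h2 : (n + i - 1).choose n * n = (n + i - 1).choose i * i := by
    obtain ⟨m, rfl⟩ : ∃ m, n = m + 1 := ⟨n - 1, by omega⟩
    have := Nat.choose_succ_right_eq (m + i) m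
    rw [show m + 1 + i - 1 = m + i by omega, this, Nat.choose_symm_add]; simp
  have hn' : (n : ℚ) ≠ 0 := by positivity
  have h1' : ((n + i).choose n : ℚ) * n = (n + i).choose (i + 1) * (i + 1) := by exact_mod_cast h1
  have h2' : ((n + i - 1).choose n : ℚ) * n = (n + i - 1).choose i * i := by exact_mod_cast h2
  field_simp
  linear_combination (-((n + i - 1).choose i : ℚ)) * h1' + ((n + i).choose (i + 1) : ℚ) * h2'

/-- Rank–nullity for `e` on the span of `AA n ℓ`: the dimension of `KK G ℓ` is `#AA - #BB`. -/
theorem finrank_KK (hn : 0 < n) (hG : G.IsSymm) (hK : K.IsSymm) (hGK : G * K = 1) (hKG : K * G = 1) (ℓ : ℕ) :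
    Module.Finite ℝ (KK G ℓ) ∧ (Module.finrank ℝ (KK G ℓ) : ℚ) = ∑ i ∈ Finset.range (ℓ + 1),
        (1 / (n : ℚ)) * ((n + i).choose (i + 1) : ℚ) * ((n + i - 1).choose i : ℚ) := by
  obtain ⟨hA, hfin⟩ := finrank_AA n hn ℓ
  have hB := finrank_BB n hn ℓ
  have hle := KK_le hG hK hGK hKG ℓ
  have h1 := LinearMap.finrank_range_add_finrank_ker
    ((raise G Sum.inl Sum.inr).domRestrict (restrictSupport ℝ (AA n ℓ)))
  rw [range_eq hG hK hGK hKG, LinearMap.ker_domRestrict, hA, hB] at h1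
  have h2 : KK G ℓ = LinearMap.ker (raise G Sum.inl Sum.inr) ⊓ restrictSupport ℝ (AA n ℓ) :=
    le_antisymm (le_inf inf_le_left hle) (inf_le_inf_left _ (restrictSupport_mono _ fun α hα => hα.2))
  have h3 : (LinearMap.ker (raise G Sum.inl Sum.inr)).comap (restrictSupport ℝ (AA n ℓ)).subtype =
      (KK G ℓ).comap (restrictSupport ℝ (AA n ℓ)).subtype := by
    rw [h2]; ext p; simp
  rw [h3, (Submodule.comapSubtypeEquivOfLe hle).finrank_eq] at h1
  refine ⟨Submodule.finiteDimensional_of_le hle, ?_⟩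
  simp_rw [binom_id n hn]
  rw [Finset.sum_sub_distrib]
  have h4 := congrArg (Nat.cast : ℕ → ℚ) h1
  push_cast at h4
  linarith

end Sym
end

/-! ### Differential operators and their symbols -/

noncomputable section
namespace Sym
open MvPolynomial

/-- The algebra of smooth functions on `ℝⁿ`. -/
def Sm (n : ℕ) : Subalgebra ℝ ((Fin n → ℝ) → ℝ) where
  carrier := {f | ContDiff ℝ (⊤ : ℕ∞) f}
  mul_mem' {a b} hf hg := by
    change ContDiff ℝ (⊤ : ℕ∞) fun x => a x * b x
    exact ContDiff.mul hf hg
  add_mem' {a b} hf hg := by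
    change ContDiff ℝ (⊤ : ℕ∞) fun x => a x + b x
    exact ContDiff.add hf hg
  algebraMap_mem' r := by
    change ContDiff ℝ (⊤ : ℕ∞) fun _ => r
    exact contDiff_const

variable {n : ℕ}

theorem contDiff_pd (a : Fin n) {f : (Fin n → ℝ) → ℝ} (hf : ContDiff ℝ (⊤ : ℕ∞) f) :
    ContDiff ℝ (⊤ : ℕ∞) (pd a f) :=
  (hf.fderiv_right (m := (⊤ : ℕ∞)) (by simp)).clm_apply contDiff_const

theorem Sm_cd (f : Sm n) : ContDiff ℝ (⊤ : ℕ∞) (f : (Fin n → ℝ) → ℝ) := f.2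

theorem Sm_diff (f : Sm n) : Differentiable ℝ (f : (Fin n → ℝ) → ℝ) :=
  (Sm_cd f).differentiable (by simp)

/-- `∂_a` on smooth functions. -/
def D (a : Fin n) : Derivation ℝ (Sm n) (Sm n) :=
  Derivation.mk'
    { toFun := fun f => ⟨pd a f, contDiff_pd a (Sm_cd f)⟩
      map_add' := fun f g => by
        ext x
        change fderiv ℝ ((f : (Fin n → ℝ) → ℝ) + (g : (Fin n → ℝ) → ℝ)) x _ = _
        rw [fderiv_add (Sm_diff f x) (Sm_diff g x)]; rfl
      map_smul' := fun r f => by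
        ext x
        change fderiv ℝ (r • (f : (Fin n → ℝ) → ℝ)) x _ = _
        rw [fderiv_const_smul (Sm_diff f x)]; rfl }
    (fun f g => by
      ext x
      change fderiv ℝ ((f : (Fin n → ℝ) → ℝ) * (g : (Fin n → ℝ) → ℝ)) x _ = _
      rw [fderiv_mul (Sm_diff f x) (Sm_diff g x)]; rfl)

theorem coe_D (a : Fin n) (f : Sm n) : (D a f : (Fin n → ℝ) → ℝ) = pd a f := rfl

theorem D_comm (a b : Fin n) (f : Sm n) : D a (D b f) = D b (D a f) := by
  ext x
  have hs : IsSymmSndFDerivAt ℝ (f : (Fin n → ℝ) → ℝ) x :=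
    (Sm_cd f).contDiffAt.isSymmSndFDerivAt
      (by rw [minSmoothness_of_isRCLikeNormedField]; exact WithTop.coe_le_coe.2 le_top)
  have hd : DifferentiableAt ℝ (fderiv ℝ (f : (Fin n → ℝ) → ℝ)) x :=
    ((Sm_cd f).fderiv_right (m := (⊤ : ℕ∞)) (by simp)).differentiable (by simp) x
  have h : ∀ a b : Fin n, pd a (pd b f) x = fderiv ℝ (fderiv ℝ (f : (Fin n → ℝ) → ℝ)) x (Pi.single a 1) (Pi.single b 1) := by
    intro a b
    unfold pd
    rw [fderiv_clm_apply hd (differentiableAt_const _)]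
    simp
  change pd a (pd b f) x = pd b (pd a f) x
  rw [h, h, hs.eq]

/-- Symbols: polynomials in `ξ` with smooth coefficients. -/
abbrev SS (n : ℕ) := MvPolynomial (Fin n) (Sm n)

/-- The derivative `∂/∂x_a` acting coefficientwise on symbols. -/
def mapD (a : Fin n) : Module.End ℝ (SS n) :=
  ((basisMonomials (Fin n) (Sm n)).repr.symm.restrictScalars ℝ).toLinearMap ∘ₗ
    Finsupp.mapRange.linearMap (D a).toLinearMap ∘ₗ
      ((basisMonomials (Fin n) (Sm n)).repr.restrictScalars ℝ).toLinearMap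

theorem coeff_mapD (a : Fin n) (p : SS n) (α : Fin n →₀ ℕ) :
    coeff α (mapD a p) = D a (coeff α p) := by
  have h : ∀ q : SS n, coeff α q = (basisMonomials (Fin n) (Sm n)).repr q α := fun q => rfl
  rw [h, h]
  change (basisMonomials (Fin n) (Sm n)).repr ((basisMonomials (Fin n) (Sm n)).repr.symm
    (Finsupp.mapRange.linearMap (D a).toLinearMap ((basisMonomials (Fin n) (Sm n)).repr p))) α = _
  rw [LinearEquiv.apply_symm_apply]
  rfl

theorem mapD_X_mul (a b : Fin n) (p : SS n) : mapD a (X b * p) = X b * mapD a p := by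
  classical
  ext1 α
  rw [coeff_mapD, coeff_X_mul', coeff_X_mul', coeff_mapD]
  split_ifs
  · rfl
  · exact Derivation.map_zero _

theorem mapD_C_mul (a : Fin n) (c : Sm n) (p : SS n) :
    mapD a (C c * p) = C (D a c) * p + C c * mapD a p := by
  ext1 α
  rw [coeff_mapD, coeff_add, coeff_C_mul, coeff_C_mul, coeff_C_mul, coeff_mapD, Derivation.leibniz,
    smul_eq_mul, smul_eq_mul, mul_comm (D a c), add_comm]

theorem mapD_pderiv (a b : Fin n) (p : SS n) : mapD a (pderiv b p) = pderiv b (mapD a p) := by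
  ext1 α
  rw [coeff_mapD, coeff_pderiv, coeff_pderiv, coeff_mapD, Derivation.leibniz]
  simp [mul_comm]

theorem mapD_comm (a b : Fin n) (p : SS n) : mapD a (mapD b p) = mapD b (mapD a p) := by
  ext1 α
  rw [coeff_mapD, coeff_mapD, coeff_mapD, coeff_mapD, D_comm]

theorem mapD_monomial (a : Fin n) (α) (c : Sm n) : mapD a (monomial α c) = monomial α (D a c) := by
  classical
  ext1 β
  rw [coeff_mapD, coeff_monomial, coeff_monomial]
  split_ifs
  · rfl
  · exact Derivation.map_zero _

/-- The commutative algebra generated by the partial derivatives. -/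
abbrev CCA (n : ℕ) : Subalgebra ℝ (Module.End ℝ (Sm n)) :=
  Algebra.adjoin ℝ (Set.range fun a : Fin n => (D a).toLinearMap)

instance instCCA (n : ℕ) : IsMulCommutative (CCA n) :=
  Algebra.isMulCommutative_adjoin ℝ (by
    rintro _ ⟨a, rfl⟩ _ ⟨b, rfl⟩
    exact LinearMap.ext fun f => D_comm a b f)

open scoped IsMulCommutative in
/-- The constant-coefficient operator `q(∂)` with symbol `q`, as an algebra homomorphism in `q`. -/
def cc (n : ℕ) : MvPolynomial (Fin n) ℝ →ₐ[ℝ] Module.End ℝ (Sm n) :=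
  (CCA n).val.comp (aeval (R := ℝ) (S₁ := CCA n)
    fun a => ⟨(D a).toLinearMap, Algebra.subset_adjoin ⟨a, rfl⟩⟩)

open scoped IsMulCommutative in
theorem cc_X (a : Fin n) : cc n (X a) = (D a).toLinearMap := by
  rw [cc, AlgHom.comp_apply, aeval_X]
  rfl

theorem cc_X_mul (a : Fin n) (q : MvPolynomial (Fin n) ℝ) (f : Sm n) :
    cc n (X a * q) f = D a (cc n q f) := by
  rw [map_mul, cc_X]; rfl

theorem cc_mul_X (a : Fin n) (q : MvPolynomial (Fin n) ℝ) (f : Sm n) :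
    cc n (X a * q) f = cc n q (D a f) := by
  rw [mul_comm, map_mul, cc_X]; rfl

/-- Quantization with derivatives on the right: `Op f p` is the operator with symbol `p` applied to `f`,
which sends the symbol `c ξ^α` to `c ∂^α f`. -/
def Op (f : Sm n) : SS n →ₗ[Sm n] Sm n :=
  (basisMonomials (Fin n) (Sm n)).constr (Sm n) fun α => cc n (monomial α 1) f

theorem Op_monomial (α) (c f : Sm n) : Op f (monomial α c) = c * cc n (monomial α 1) f := by
  have h : (monomial α c : SS n) = c • basisMonomials (Fin n) (Sm n) α := by
    simp [smul_monomial]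
  rw [h, map_smul, Op, Module.Basis.constr_basis]
  rfl

theorem Op_smul (r : ℝ) (p : SS n) (f : Sm n) : Op f (r • p) = r • Op f p := by
  rw [← algebraMap_smul (Sm n) r p, map_smul, algebraMap_smul]

theorem Op_add_left (f g : Sm n) (p : SS n) : Op (f + g) p = Op f p + Op g p := by
  induction p using MvPolynomial.induction_on' with
  | monomial α c => rw [Op_monomial, Op_monomial, Op_monomial, map_add, mul_add]
  | add p q hp hq => rw [map_add, map_add, map_add, hp, hq]; abel

theorem Op_smul_left (r : ℝ) (f : Sm n) (p : SS n) : Op (r • f) p = r • Op f p := by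
  induction p using MvPolynomial.induction_on' with
  | monomial α c => rw [Op_monomial, Op_monomial, map_smul, mul_smul_comm]
  | add p q hp hq => rw [map_add, map_add, hp, hq, smul_add]

theorem Op_sum_left {ι : Type*} (s : Finset ι) (f : ι → Sm n) (p : SS n) :
    Op (∑ i ∈ s, f i) p = ∑ i ∈ s, Op (f i) p :=
  map_sum (AddMonoidHom.mk' (fun f : Sm n => Op f p) fun f g => Op_add_left f g p) f s

theorem Op_C_mul (c : Sm n) (q : MvPolynomial (Fin n) ℝ) (f : Sm n) :
    Op f (C c * MvPolynomial.map (algebraMap ℝ (Sm n)) q) = c * cc n q f := by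
  induction q using MvPolynomial.induction_on' with
  | monomial α r =>
    rw [map_monomial, C_mul_monomial, Op_monomial, mul_assoc]
    congr 1
    rw [show (monomial α r : MvPolynomial (Fin n) ℝ) = r • monomial α 1 by
      rw [smul_monomial, smul_eq_mul, mul_one], map_smul, LinearMap.smul_apply, Algebra.smul_def]
  | add p q hp hq =>
    rw [map_add, map_add, mul_add, map_add, LinearMap.add_apply, hp, hq, mul_add]

theorem X_mul_mon {R : Type*} [CommSemiring R] (a : Fin n) (α) (c : R) :
    X a * monomial α c = monomial (Finsupp.single a 1 + α) c := by
  rw [show (X a : MvPolynomial (Fin n) R) = monomial (Finsupp.single a 1) 1 from rfl, monomial_mul, one_mul]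

theorem Op_X_mul (a : Fin n) (p : SS n) (f : Sm n) : Op f (X a * p) = Op (D a f) p := by
  induction p using MvPolynomial.induction_on' with
  | monomial α c => rw [X_mul_mon, Op_monomial, Op_monomial, ← cc_mul_X, X_mul_mon]
  | add p q hp hq => rw [mul_add, map_add, map_add, hp, hq]

/-- The product rule `∂_a (p(x,∂) f) = (∂_{x_a} p)(x,∂) f + p(x,∂) ∂_a f`. -/
theorem D_Op (a : Fin n) (p : SS n) (f : Sm n) : D a (Op f p) = Op f (mapD a p) + Op (D a f) p := by
  induction p using MvPolynomial.induction_on' with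
  | monomial α c =>
    rw [mapD_monomial, Op_monomial, Op_monomial, Op_monomial, Derivation.leibniz, ← cc_X_mul, cc_mul_X,
      smul_eq_mul, smul_eq_mul]; ring
  | add p q hp hq =>
    simp only [map_add, hp, hq]; abel

/-- The Laplacian on the algebra of smooth functions. -/
def lapS (G : Matrix (Fin n) (Fin n) ℝ) (f : Sm n) : Sm n := ∑ a, ∑ b, G a b • D a (D b f)

/-- The operator `∑ G_{ab} (∂_{x_a} ∂_{x_b} + 2 ξ_a ∂_{x_b})` on symbols, which corresponds to the
commutator with the Laplacian. -/
def MM (G : Matrix (Fin n) (Fin n) ℝ) : Module.End ℝ (SS n) :=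
  ∑ a, ∑ b, G a b • (mapD a ∘ₗ mapD b + (2 : ℝ) • (LinearMap.mulLeft ℝ (X a) ∘ₗ mapD b))

theorem MM_apply (G : Matrix (Fin n) (Fin n) ℝ) (p : SS n) :
    MM G p = ∑ a, ∑ b, G a b • (mapD a (mapD b p) + (2 : ℝ) • (X a * mapD b p)) := by
  simp [MM, LinearMap.sum_apply]

/-- The commutator of the Laplacian with the operator of symbol `p` has symbol `MM G p`. -/
theorem lapS_Op (G : Matrix (Fin n) (Fin n) ℝ) (hG : G.IsSymm) (p : SS n) (f : Sm n) :
    lapS G (Op f p) = Op (lapS G f) p + Op f (MM G p) := by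
  have h : ∑ a, ∑ b, G a b • Op (D b f) (mapD a p) = ∑ a, ∑ b, G a b • Op (D a f) (mapD b p) := by
    rw [Finset.sum_comm]
    exact Finset.sum_congr rfl fun a _ => Finset.sum_congr rfl fun b _ => by rw [hG.apply]
  simp_rw [lapS, MM_apply, D_Op, map_add, D_Op, map_sum, Op_sum_left, Op_smul, Op_smul_left, map_add,
    Op_smul, Op_X_mul]
  simp_rw [smul_add, Finset.sum_add_distrib, smul_comm _ (2 : ℝ), ← Finset.smul_sum]
  rw [h, two_smul]; abel

/-- The exponential function `x ↦ exp ⟨ξ, x⟩`. -/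
def expF (ξ : Fin n → ℝ) : Sm n :=
  ⟨fun x => Real.exp (∑ a, ξ a * x a), by
    change ContDiff ℝ (⊤ : ℕ∞) fun x : Fin n → ℝ => Real.exp (∑ a, ξ a * x a)
    fun_prop⟩

theorem D_expF (a : Fin n) (ξ : Fin n → ℝ) : D a (expF ξ) = ξ a • expF ξ := by
  ext x
  have h : HasFDerivAt (fun x : Fin n → ℝ => ∑ a, ξ a * x a) (∑ a, ξ a • (ContinuousLinearMap.proj a : (Fin n → ℝ) →L[ℝ] ℝ)) x := by
    refine HasFDerivAt.fun_sum fun a _ => ?_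
    exact (ContinuousLinearMap.proj (R := ℝ) (φ := fun _ : Fin n => ℝ) a).hasFDerivAt.const_smul (ξ a)
  change fderiv ℝ (fun x => Real.exp (∑ a, ξ a * x a)) x _ = ξ a * Real.exp (∑ a, ξ a * x a)
  rw [h.exp.fderiv]
  simp [Pi.single_apply, mul_comm]

theorem cc_expF (q : MvPolynomial (Fin n) ℝ) (ξ : Fin n → ℝ) : cc n q (expF ξ) = eval ξ q • expF ξ := by
  induction q using MvPolynomial.induction_on with
  | C r => rw [← algebraMap_eq, AlgHom.commutes, Module.algebraMap_end_apply]; simp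
  | add p q hp hq => rw [map_add, LinearMap.add_apply, hp, hq, map_add, add_smul]
  | mul_X p a hp =>
    rw [mul_comm, cc_X_mul, hp, Derivation.map_smul, D_expF, smul_smul, map_mul, eval_X, mul_comm]

/-- Evaluation of smooth functions at the point `x`. -/
def evx (x : Fin n → ℝ) : Sm n →ₐ[ℝ] ℝ := (Pi.evalAlgHom ℝ (fun _ => ℝ) x).comp (Sm n).val

theorem evx_apply (x : Fin n → ℝ) (f : Sm n) : evx x f = (f : (Fin n → ℝ) → ℝ) x := rfl

/-- The symbol is recovered from the action on exponentials: `p(x,∂) exp ⟨ξ, ·⟩ = p(x,ξ) exp ⟨ξ, ·⟩`. -/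
theorem Op_expF (p : SS n) (ξ x : Fin n → ℝ) :
    (Op (expF ξ) p : (Fin n → ℝ) → ℝ) x = eval ξ (MvPolynomial.map (evx x).toRingHom p) * Real.exp (∑ a, ξ a * x a) := by
  induction p using MvPolynomial.induction_on' with
  | monomial α c =>
    have h : (monomial α ((evx x).toRingHom c) : MvPolynomial (Fin n) ℝ)
        = (evx x).toRingHom c • monomial α 1 := by
      rw [smul_monomial, smul_eq_mul, mul_one]
    rw [Op_monomial, cc_expF, map_monomial, h, smul_eval, mul_assoc]
    rfl
  | add p q hp hq => rw [map_add, map_add, map_add, add_mul, ← hp, ← hq]; rfl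

theorem SS_ext {p q : SS n} (h : ∀ x ξ, eval ξ (MvPolynomial.map (evx x).toRingHom p) = eval ξ (MvPolynomial.map (evx x).toRingHom q)) :
    p = q := by
  ext α x
  have h1 := MvPolynomial.funext (h x)
  have h2 := congrArg (coeff α) h1
  rw [coeff_map, coeff_map] at h2
  exact h2

/-- An operator that vanishes on smooth functions has zero symbol. -/
theorem Op_eq_zero {p : SS n} (h : ∀ f : Sm n, Op f p = 0) : p = 0 := by
  refine SS_ext fun x ξ => ?_
  have h1 := Op_expF p ξ x
  have h0 : eval ξ (MvPolynomial.map (evx x).toRingHom (0 : SS n)) = 0 := by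
    simp only [_root_.map_zero]
  rw [h0]
  rw [h] at h1
  exact (mul_eq_zero.mp h1.symm).resolve_right (Real.exp_pos _).ne'

end Sym
end

/-! ### Operators given by families of coefficients -/

noncomputable section
namespace Sym
open MvPolynomial
variable {n : ℕ}

/-- The symbols of degree at most `ℓ` in `ξ`. -/
def SL (n ℓ : ℕ) : Submodule (Sm n) (SS n) := restrictSupport (Sm n) {α | ∑ a, α a ≤ ℓ}

theorem mem_SL {ℓ : ℕ} {p : SS n} : p ∈ SL n ℓ ↔ ∀ α, coeff α p ≠ 0 → ∑ a, α a ≤ ℓ := by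
  rw [SL, mem_restrictSupport_iff]
  simp [Set.subset_def]

/-- The symbol `∑ c^{i₁…i_m} ξ_{i₁}⋯ξ_{i_m}` of a family of smooth coefficients. -/
def symS {ℓ : ℕ} (c : (m : Fin (ℓ + 1)) → (Fin (m : ℕ) → Fin n) → Sm n) : SS n :=
  ∑ m, ∑ i, C (c m i) * ∏ j, X (i j)

theorem coe_cc_prod (m : ℕ) (i : Fin m → Fin n) (f : Sm n) :
    (cc n (∏ j, X (i j)) f : (Fin n → ℝ) → ℝ) = pdIter m i f := by
  induction m with
  | zero => simp [pdIter]
  | succ m ih =>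
    rw [Fin.prod_univ_succ, cc_X_mul, coe_D, ih, pdIter]

/-- The operator with symbol `symS c` is the operator given by the coefficients `c`. -/
theorem Op_symS {ℓ : ℕ} (c : (m : Fin (ℓ + 1)) → (Fin (m : ℕ) → Fin n) → Sm n) (f : Sm n) :
    (Op f (symS c) : (Fin n → ℝ) → ℝ) = applyOp (fun m i => (c m i : (Fin n → ℝ) → ℝ)) f := by
  have h : Op f (symS c) = ∑ m, ∑ i, c m i * cc n (∏ j, X (i j)) f := by
    rw [symS, map_sum]
    refine Finset.sum_congr rfl fun m _ => ?_
    rw [map_sum]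
    refine Finset.sum_congr rfl fun i _ => ?_
    rw [← Op_C_mul, map_prod]
    simp
  rw [h]
  ext x
  rw [← evx_apply, map_sum]
  refine Finset.sum_congr rfl fun m _ => ?_
  rw [map_sum]
  refine Finset.sum_congr rfl fun i _ => ?_
  rw [map_mul, evx_apply, evx_apply, coe_cc_prod]

theorem prod_X_eq (m : ℕ) (i : Fin m → Fin n) :
    ∃ α : Fin n →₀ ℕ, ∑ a, α a = m ∧ (∏ j, X (i j) : SS n) = monomial α 1 := by
  classical
  induction m with
  | zero => exact ⟨0, by simp, by simp⟩
  | succ m ih =>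
    obtain ⟨α, h1, h2⟩ := ih fun j => i j.succ
    refine ⟨Finsupp.single (i 0) 1 + α, ?_, ?_⟩
    · simp [Finset.sum_add_distrib, h1, Finsupp.single_apply, add_comm]
    · rw [Fin.prod_univ_succ, h2, X_mul_mon]

theorem exists_prod_X (m : ℕ) (α : Fin n →₀ ℕ) (h : ∑ a, α a = m) :
    ∃ i : Fin m → Fin n, (∏ j, X (i j) : SS n) = monomial α 1 := by
  classical
  induction m generalizing α with
  | zero =>
    have : α = 0 := by
      ext a
      exact (Finset.sum_eq_zero_iff.mp h) a (Finset.mem_univ a)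
    exact ⟨Fin.elim0, by simp [this]⟩
  | succ m ih =>
    obtain ⟨a, -, ha⟩ := Finset.exists_ne_zero_of_sum_ne_zero (h.trans_ne m.succ_ne_zero)
    have hle : Finsupp.single a 1 ≤ α := by
      rw [Finsupp.single_le_iff]; omega
    obtain ⟨β, rfl⟩ := exists_add_of_le hle
    obtain ⟨i, hi⟩ := ih β (by
      simp [Finset.sum_add_distrib, Finsupp.single_apply] at h
      omega)
    refine ⟨Fin.cons a i, ?_⟩
    rw [Fin.prod_univ_succ]
    simp only [Fin.cons_zero, Fin.cons_succ]
    rw [hi, X_mul_mon]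

theorem symS_mem {ℓ : ℕ} (c : (m : Fin (ℓ + 1)) → (Fin (m : ℕ) → Fin n) → Sm n) :
    symS c ∈ SL n ℓ := by
  classical
  refine Submodule.sum_mem _ fun m _ => Submodule.sum_mem _ fun i _ => ?_
  obtain ⟨α, h1, h2⟩ := prod_X_eq m i
  rw [h2, ← smul_eq_C_mul]
  refine Submodule.smul_mem _ _ (mem_SL.mpr fun β hβ => ?_)
  rw [coeff_monomial] at hβ
  have : α = β := by by_contra h; exact hβ (if_neg h)
  subst this
  have := m.2
  omega

theorem symS_add {ℓ : ℕ} (c d : (m : Fin (ℓ + 1)) → (Fin (m : ℕ) → Fin n) → Sm n) :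
    symS (fun m i => c m i + d m i) = symS c + symS d := by
  simp only [symS, map_add, add_mul, Finset.sum_add_distrib]

/-- Every symbol of degree at most `ℓ` comes from a family of coefficients. -/
theorem exists_symS {ℓ : ℕ} {p : SS n} (hp : p ∈ SL n ℓ) :
    ∃ c : (m : Fin (ℓ + 1)) → (Fin (m : ℕ) → Fin n) → Sm n, symS c = p := by
  classical
  have key : ∀ s : Finset (Fin n →₀ ℕ), s ⊆ p.support →
      ∃ c : (m : Fin (ℓ + 1)) → (Fin (m : ℕ) → Fin n) → Sm n,
        symS c = ∑ α ∈ s, monomial α (coeff α p) := by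
    intro s
    induction s using Finset.induction_on with
    | empty => exact fun _ => ⟨fun _ _ => 0, by simp [symS]⟩
    | insert α s hα ih =>
      intro hs
      obtain ⟨c, hc⟩ := ih ((Finset.subset_insert _ _).trans hs)
      have hα' : ∑ a, α a ≤ ℓ :=
        mem_SL.mp hp α (mem_support_iff.mp (hs (Finset.mem_insert_self _ _)))
      obtain ⟨i, hi⟩ := exists_prod_X _ α rfl
      let m₀ : Fin (ℓ + 1) := ⟨∑ a, α a, by omega⟩
      refine ⟨fun m i' => (Pi.single m₀ (Pi.single i (coeff α p)) :
        (m : Fin (ℓ + 1)) → (Fin (m : ℕ) → Fin n) → Sm n) m i' + c m i', ?_⟩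
      rw [symS_add, hc, Finset.sum_insert hα]
      congr 1
      rw [symS, Finset.sum_eq_single m₀, Finset.sum_eq_single i]
      · rw [Pi.single_eq_same, Pi.single_eq_same]
        change C _ * (∏ j : Fin (∑ a, α a), X (i j)) = _
        rw [hi, C_mul_monomial, mul_one]
      · intro b _ hb
        rw [Pi.single_eq_same, Pi.single_eq_of_ne hb, C_0, zero_mul]
      · exact fun h => absurd (Finset.mem_univ _) h
      · intro b _ hb
        rw [Pi.single_eq_of_ne hb]
        exact Finset.sum_eq_zero fun i _ => by rw [Pi.zero_apply, C_0, zero_mul]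
      · exact fun h => absurd (Finset.mem_univ _) h
  obtain ⟨c, hc⟩ := key p.support subset_rfl
  exact ⟨c, hc.trans (support_sum_monomial_coeff p)⟩

theorem lap_coe (G : Matrix (Fin n) (Fin n) ℝ) (f : Sm n) :
    lap G f = (lapS G f : (Fin n → ℝ) → ℝ) := by
  ext x
  rw [← evx_apply, lapS, map_sum]
  refine Finset.sum_congr rfl fun a _ => ?_
  rw [map_sum]
  refine Finset.sum_congr rfl fun b _ => ?_
  rw [map_smul]; rfl

/-- An operator commutes with the Laplacian exactly when its symbol is annihilated by `MM G`. -/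
theorem commutes_iff {ℓ : ℕ} (G : Matrix (Fin n) (Fin n) ℝ) (hG : G.IsSymm)
    (c : (m : Fin (ℓ + 1)) → (Fin (m : ℕ) → Fin n) → Sm n) :
    CommutesWithLap G (fun m i => (c m i : (Fin n → ℝ) → ℝ)) ↔ MM G (symS c) = 0 := by
  have h : ∀ f : Sm n, lap G (applyOp (fun m i => (c m i : (Fin n → ℝ) → ℝ)) f) =
      applyOp (fun m i => (c m i : (Fin n → ℝ) → ℝ)) (lap G f) ↔ Op f (MM G (symS c)) = 0 := by
    intro f
    rw [← Op_symS, lap_coe, lap_coe, ← Op_symS, Subtype.coe_inj, lapS_Op G hG, add_eq_left]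
  constructor
  · intro hc
    exact Op_eq_zero fun f => (h f).mp (funext (hc f (Sm_cd f)))
  · intro hc f hf x
    exact congrFun ((h ⟨f, hf⟩).mpr (by rw [hc]; exact LinearMap.map_zero _)) x

end Sym
end

/-! ### Solutions of the symbol equation have polynomial coefficients -/

noncomputable section
namespace Sym
open MvPolynomial
variable {n : ℕ}

/-- The derivation `∑_b K_{cb} ∂/∂ξ_b` of the algebra of symbols; up to sign it corresponds to the
commutator of an operator with multiplication by the linear function `∑_b K_{cb} x_b`. -/
def PP (K : Matrix (Fin n) (Fin n) ℝ) (c : Fin n) : Module.End ℝ (SS n) :=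
  ∑ b, K c b • ((pderiv b : Derivation (Sm n) (SS n) (SS n)).toLinearMap.restrictScalars ℝ)

theorem PP_apply (K : Matrix (Fin n) (Fin n) ℝ) (c : Fin n) (p : SS n) :
    PP K c p = ∑ b, K c b • pderiv b p := by
  simp [PP, LinearMap.sum_apply]

theorem mapD_PP (K : Matrix (Fin n) (Fin n) ℝ) (a c : Fin n) (p : SS n) :
    mapD a (PP K c p) = PP K c (mapD a p) := by
  rw [PP_apply, PP_apply, map_sum]
  exact Finset.sum_congr rfl fun b _ => by rw [map_smul, mapD_pderiv]

theorem PP_X_mul (K : Matrix (Fin n) (Fin n) ℝ) (a c : Fin n) (p : SS n) :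
    PP K c (X a * p) = X a * PP K c p + K c a • p := by
  classical
  rw [PP_apply, PP_apply]
  simp_rw [Derivation.leibniz, pderiv_X, smul_add, Finset.sum_add_distrib, smul_eq_mul, Finset.mul_sum,
    mul_smul_comm]
  congr 1
  rw [Finset.sum_eq_single a]
  · simp
  · intro b _ hb
    rw [Pi.single_eq_of_ne hb.symm, mul_zero, smul_zero]
  · simp

theorem MM_mapD (G : Matrix (Fin n) (Fin n) ℝ) (c : Fin n) (p : SS n) :
    MM G (mapD c p) = mapD c (MM G p) := by
  rw [MM_apply, MM_apply, map_sum]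
  refine Finset.sum_congr rfl fun a _ => ?_
  rw [map_sum]
  refine Finset.sum_congr rfl fun b _ => ?_
  rw [map_smul, map_add, map_smul, mapD_X_mul, mapD_comm b c, mapD_comm a c]

/-- The commutator `[MM, P_c] = -2 ∂_{x_c}`. -/
theorem MM_PP (G K : Matrix (Fin n) (Fin n) ℝ) (hKG : K * G = 1) (c : Fin n) (p : SS n) :
    MM G (PP K c p) = PP K c (MM G p) - (2 : ℝ) • mapD c p := by
  classical
  have h : ∑ a, ∑ b, G a b • K c a • mapD b p = mapD c p := by
    rw [Finset.sum_comm]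
    simp_rw [smul_smul, ← Finset.sum_smul]
    have h1 : ∀ b, ∑ a, G a b * K c a = (1 : Matrix (Fin n) (Fin n) ℝ) c b := by
      intro b
      rw [← hKG, Matrix.mul_apply]
      exact Finset.sum_congr rfl fun a _ => mul_comm _ _
    simp_rw [h1, Matrix.one_apply, ite_smul, one_smul, zero_smul]
    simp
  rw [eq_sub_iff_add_eq]
  nth_rw 1 [← h]
  rw [MM_apply, MM_apply, map_sum, Finset.smul_sum, ← Finset.sum_add_distrib]
  refine Finset.sum_congr rfl fun a _ => ?_
  rw [map_sum, Finset.smul_sum, ← Finset.sum_add_distrib]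
  refine Finset.sum_congr rfl fun b _ => ?_
  rw [map_smul, map_add, map_smul, PP_X_mul, mapD_PP, mapD_PP]
  rw [smul_comm (2 : ℝ) (G a b), ← smul_add]
  refine congrArg (G a b • ·) ?_
  refine (add_assoc _ _ _).trans (congrArg _ ?_)
  exact (smul_add _ _ _).symm

theorem sub_two_smul {V : Type*} [AddCommGroup V] [Module ℝ V] (m : ℝ) (x y : V) :
    x - (2 : ℝ) • y - (2 * (m + 1)) • y = x - (2 * (m + 1 + 1)) • y := by
  module

theorem zero_sub_smul {V : Type*} [AddCommGroup V] [Module ℝ V] (r : ℝ) (y : V) :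
    0 - r • y = -r • y := by
  module

/-- The commutator `[MM^{m+1}, P_c] = -2 (m+1) ∂_{x_c} MM^m`, since `∂_{x_c}` commutes with `MM`. -/
theorem MM_pow_PP (G K : Matrix (Fin n) (Fin n) ℝ) (hKG : K * G = 1) (c : Fin n) (p : SS n) (m : ℕ) :
    (MM G ^ (m + 1)) (PP K c p) =
      PP K c ((MM G ^ (m + 1)) p) - (2 * (m + 1) : ℝ) • mapD c ((MM G ^ m) p) := by
  induction m with
  | zero => simp [MM_PP G K hKG]
  | succ m ih =>
    rw [pow_succ', Module.End.mul_apply, ih, map_sub, MM_PP G K hKG, map_smul, MM_mapD,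
      ← Module.End.mul_apply (MM G), ← Module.End.mul_apply (MM G), ← pow_succ', ← pow_succ']
    push_cast
    exact sub_two_smul (V := SS n) _ _ _

/-- If `MM p = 0`, then `MM^m P_{c₁} ⋯ P_{c_m} p` is a nonzero multiple of `∂_{x_{c₁}} ⋯ ∂_{x_{c_m}} p`. -/
theorem MM_pow_list (G K : Matrix (Fin n) (Fin n) ℝ) (hKG : K * G = 1) {p : SS n} (hp : MM G p = 0)
    (l : List (Fin n)) :
    MM G (l.foldr (fun c q => mapD c q) p) = 0 ∧
    ∃ k : ℝ, k ≠ 0 ∧ (MM G ^ l.length) (l.foldr (fun c q => PP K c q) p) =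
      k • l.foldr (fun c q => mapD c q) p := by
  induction l with
  | nil => exact ⟨hp, 1, one_ne_zero, by simp⟩
  | cons c l ih =>
    obtain ⟨h0, k, hk, h⟩ := ih
    simp only [List.foldr_cons, List.length_cons]
    refine ⟨by rw [MM_mapD, h0]; exact LinearMap.map_zero _, -(2 * (l.length + 1) * k), ?_, ?_⟩
    · have : (0 : ℝ) < l.length + 1 := by positivity
      exact neg_ne_zero.mpr (by positivity)
    · rw [MM_pow_PP G K hKG, h, map_smul, pow_succ', Module.End.mul_apply, h, map_smul, h0, smul_zero,
        (PP K c).map_zero, smul_smul]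
      exact zero_sub_smul (V := SS n) _ _

/-- Each `P_c` lowers the degree in `ξ`. -/
theorem PP_list_coeff (K : Matrix (Fin n) (Fin n) ℝ) {ℓ : ℕ} {p : SS n} (hp : p ∈ SL n ℓ)
    (l : List (Fin n)) (α) (h : coeff α (l.foldr (fun c q => PP K c q) p) ≠ 0) :
    ∑ a, α a + l.length ≤ ℓ := by
  classical
  induction l generalizing α with
  | nil => exact mem_SL.mp hp α h
  | cons c l ih =>
    rw [List.foldr_cons, PP_apply, coeff_sum] at h
    obtain ⟨b, -, hb⟩ := Finset.exists_ne_zero_of_sum_ne_zero h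
    rw [coeff_smul, coeff_pderiv] at hb
    have h1 := ih (α + Finsupp.single b 1) (fun h0 => hb (by rw [h0, zero_mul, smul_zero]))
    simp [Finset.sum_add_distrib, Finsupp.single_apply] at h1
    rw [List.length_cons]
    omega

/-- A symbol `p` of degree at most `ℓ` with `MM p = 0` has coefficients killed by all derivatives of order `ℓ + 1`,
because `ℓ + 1` of the operators `P_c` annihilate a symbol of degree at most `ℓ`. -/
theorem foldr_D_coeff (G K : Matrix (Fin n) (Fin n) ℝ) (hKG : K * G = 1) {ℓ : ℕ} {p : SS n}
    (hp : p ∈ SL n ℓ) (h0 : MM G p = 0) (l : List (Fin n)) (hl : l.length = ℓ + 1) (α) :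
    l.foldr (fun c f => D c f) (coeff α p) = 0 := by
  obtain ⟨-, k, hk, h⟩ := MM_pow_list G K hKG h0 l
  have h1 : l.foldr (fun c q => PP K c q) p = 0 := by
    ext1 β
    by_contra hβ
    have := PP_list_coeff K hp l β hβ
    omega
  rw [h1, LinearMap.map_zero] at h
  have h2 := (smul_eq_zero.mp h.symm).resolve_left hk
  have h3 : ∀ l : List (Fin n), coeff α (l.foldr (fun c q => mapD c q) p) =
      l.foldr (fun c f => D c f) (coeff α p) := by
    intro l
    induction l with
    | nil => rfl
    | cons c l ih => rw [List.foldr_cons, List.foldr_cons, coeff_mapD, ih]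
  rw [← h3, h2, coeff_zero]

/-- For a polynomial `q` there is a polynomial `r` with `t r(tx)` a primitive of `t ↦ q(tx)`. -/
theorem exists_radial_primitive (q : MvPolynomial (Fin n) ℝ) :
    ∃ q' : MvPolynomial (Fin n) ℝ, ∀ (x : Fin n → ℝ) (t : ℝ),
      HasDerivAt (fun t : ℝ => t * eval (t • x) q') (eval (t • x) q) t := by
  induction q using MvPolynomial.induction_on' with
  | monomial α c =>
    refine ⟨monomial α (c / (∑ a, α a + 1 : ℕ)), fun x t => ?_⟩
    have h : ∀ (t c : ℝ), eval (t • x) (monomial α c) = c * t ^ (∑ a, α a) * ∏ a, x a ^ α a := by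
      intro t c
      rw [eval_monomial, Finsupp.prod_fintype _ _ (by simp)]
      simp only [Pi.smul_apply, smul_eq_mul, mul_pow, Finset.prod_mul_distrib, Finset.prod_pow_eq_pow_sum]
      ring
    simp_rw [h]
    have h2 := ((hasDerivAt_pow (∑ a, α a + 1) t).mul_const
      (c / (∑ a, α a + 1 : ℕ) * ∏ a, x a ^ α a))
    have h3 : ((∑ a, α a + 1 : ℕ) : ℝ) ≠ 0 := by positivity
    have h4 : (fun t : ℝ => t * (c / (∑ a, α a + 1 : ℕ) * t ^ (∑ a, α a) * ∏ a, x a ^ α a)) =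
        fun t => t ^ (∑ a, α a + 1) * (c / (∑ a, α a + 1 : ℕ) * ∏ a, x a ^ α a) := by
      ext t; ring
    have h5 : c * t ^ (∑ a, α a) * ∏ a, x a ^ α a = ((∑ a, α a + 1 : ℕ) : ℝ) *
        t ^ (∑ a, α a + 1 - 1) * (c / (∑ a, α a + 1 : ℕ) * ∏ a, x a ^ α a) := by
      rw [Nat.add_sub_cancel]; field_simp
    rw [h4, h5]
    exact h2
  | add p q hp hq =>
    obtain ⟨p', hp⟩ := hp
    obtain ⟨q', hq⟩ := hq
    refine ⟨p' + q', fun x t => ?_⟩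
    have := (hp x t).add (hq x t)
    simp only [map_add, mul_add]
    exact this

theorem fderiv_eq_sum (f : (Fin n → ℝ) → ℝ) (y x : Fin n → ℝ) :
    fderiv ℝ f y x = ∑ a, x a * pd a f y := by
  classical
  conv_lhs => rw [pi_eq_sum_univ x]
  rw [map_sum]
  refine Finset.sum_congr rfl fun a _ => ?_
  rw [map_smul, smul_eq_mul, pd]
  congr 2
  ext j
  simp [Pi.single_apply, eq_comm]

/-- A smooth function with polynomial partial derivatives is a polynomial, by integrating along rays:
`f(x) = f(0) + ∑_a x_a ∫_0^1 (∂_a f)(tx) dt`. -/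
theorem exists_poly_of_pd (f : Sm n) (h : ∀ a, ∃ q : MvPolynomial (Fin n) ℝ, ∀ x, pd a f x = eval x q) :
    ∃ q : MvPolynomial (Fin n) ℝ, ∀ x, (f : (Fin n → ℝ) → ℝ) x = eval x q := by
  choose q hq using h
  choose q' hq' using fun a => exists_radial_primitive (q a)
  refine ⟨C ((f : (Fin n → ℝ) → ℝ) 0) + ∑ a, X a * q' a, fun x => ?_⟩
  have h1 : ∀ t : ℝ, HasDerivAt (fun t : ℝ => (f : (Fin n → ℝ) → ℝ) (t • x))
      (∑ a, x a * eval (t • x) (q a)) t := by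
    intro t
    have h2 : HasDerivAt (fun t : ℝ => t • x) x t := by
      simpa using (hasDerivAt_id t).smul_const x
    have h3 := (Sm_diff f (t • x)).hasFDerivAt.comp_hasDerivAt t h2
    rw [fderiv_eq_sum] at h3
    simp_rw [hq] at h3
    exact h3
  have h2 : ∀ t : ℝ, HasDerivAt (fun t : ℝ => ∑ a, x a * (t * eval (t • x) (q' a)))
      (∑ a, x a * eval (t • x) (q a)) t := fun t =>
    HasDerivAt.fun_sum fun a _ => (hq' a x t).const_mul (x a)
  have h3 := is_const_of_deriv_eq_zero (fun t => ((h1 t).sub (h2 t)).differentiableAt)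
    (fun t => by rw [((h1 t).sub (h2 t)).deriv, sub_self]) 1 0
  simp only [Pi.sub_apply, one_smul, zero_smul, one_mul, zero_mul, mul_zero, Finset.sum_const_zero,
    sub_zero] at h3
  rw [map_add, eval_C, map_sum, ← h3]
  simp

/-- A smooth function all of whose derivatives of order `k` vanish is a polynomial. -/
theorem exists_poly (k : ℕ) (f : Sm n)
    (h : ∀ l : List (Fin n), l.length = k → l.foldr (fun c f => D c f) f = 0) :
    ∃ q : MvPolynomial (Fin n) ℝ, ∀ x, (f : (Fin n → ℝ) → ℝ) x = eval x q := by
  induction k generalizing f with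
  | zero =>
    have : f = 0 := h [] rfl
    exact ⟨0, fun x => by rw [this]; simp⟩
  | succ k ih =>
    refine exists_poly_of_pd f fun a => ih (D a f) fun l hl => ?_
    rw [← h (l ++ [a]) (by simp [hl]), List.foldr_append]
    rfl

end Sym
end

/-! ### Polynomial symbols -/

noncomputable section
namespace Sym
open MvPolynomial
variable {n : ℕ}

/-- The coordinate function `x_a`. -/
def coordS (a : Fin n) : Sm n := ⟨fun x => x a, by
  change ContDiff ℝ (⊤ : ℕ∞) fun x : Fin n → ℝ => x a
  exact contDiff_apply ℝ ℝ a⟩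

theorem D_coordS (a b : Fin n) : D a (coordS b) = if b = a then 1 else 0 := by
  ext x
  have h : HasFDerivAt (fun x : Fin n → ℝ => x b) (ContinuousLinearMap.proj b : (Fin n → ℝ) →L[ℝ] ℝ) x :=
    (ContinuousLinearMap.proj (R := ℝ) (φ := fun _ : Fin n => ℝ) b).hasFDerivAt
  change fderiv ℝ (fun x : Fin n → ℝ => x b) x _ = _
  rw [h.fderiv]
  split_ifs with hab
  · subst hab; simp
  · simp [hab]

/-- Polynomials in `(x, ξ)` regarded as symbols. -/
def iota (n : ℕ) : PS n →ₐ[ℝ] SS n := aeval (Sum.elim (fun a => C (coordS a)) X)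

theorem iota_inl (a : Fin n) : iota n (X (Sum.inl a)) = C (coordS a) := by
  rw [iota, aeval_X]; rfl

theorem iota_inr (a : Fin n) : iota n (X (Sum.inr a)) = X a := by
  rw [iota, aeval_X]; rfl

theorem iota_zero : iota n 0 = 0 := (iota n).map_zero

theorem iota_C (r : ℝ) : iota n (C r) = r • 1 := by
  rw [← algebraMap_eq, AlgHom.commutes, Algebra.algebraMap_eq_smul_one]

/-- The symbol of `Q` has the value `Q(x, ξ)` at the point `(x, ξ)`. -/
theorem eval_iota (Q : PS n) (x ξ : Fin n → ℝ) :
    eval ξ (MvPolynomial.map (evx x).toRingHom (iota n Q)) = eval (Sum.elim x ξ) Q := by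
  induction Q using MvPolynomial.induction_on with
  | C r =>
    rw [iota_C, ← algebraMap_smul (Sm n) r (1 : SS n), smul_eq_C_mul, mul_one, map_C, eval_C, eval_C]
    exact (evx x).commutes r
  | add p q hp hq => rw [map_add, map_add, map_add, map_add, hp, hq]
  | mul_X p i hp =>
    rw [map_mul, map_mul, map_mul, map_mul, hp, eval_X]
    rcases i with a | a
    · rw [iota_inl, map_C, eval_C]; rfl
    · rw [iota_inr, map_X, eval_X]; rfl

theorem iota_injective : Function.Injective (iota n) := by
  intro P Q h
  refine MvPolynomial.funext fun z => ?_
  have hz : z = Sum.elim (z ∘ Sum.inl) (z ∘ Sum.inr) := (Sum.elim_comp_inl_inr z).symm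
  rw [hz, ← eval_iota, ← eval_iota, h]

theorem mapD_iota (a : Fin n) (Q : PS n) : mapD a (iota n Q) = iota n (pderiv (Sum.inl a) Q) := by
  classical
  induction Q using MvPolynomial.induction_on with
  | C r =>
    rw [iota_C, map_smul, pderiv_C, ← C_1, C_apply, mapD_monomial, Derivation.map_one_eq_zero, monomial_zero]
    simp
  | add p q hp hq => simp only [map_add, hp, hq]
  | mul_X p i hp =>
    rw [Derivation.leibniz, map_mul (iota n), map_add, smul_eq_mul, smul_eq_mul, map_mul (iota n), map_mul (iota n), ← hp,
      mul_comm (iota n p) (iota n (X i))]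
    rcases i with b | b
    · rw [iota_inl, mapD_C_mul, D_coordS]
      by_cases hab : b = a
      · subst hab
        rw [if_pos rfl, pderiv_X_self, C_1, map_one, one_mul, mul_one]
      · rw [if_neg hab, pderiv_X_of_ne (by simpa using hab), C_0, iota_zero, zero_mul, mul_zero]
    · rw [iota_inr, mapD_X_mul, pderiv_X_of_ne (by simp), iota_zero, mul_zero, zero_add]

/-- On polynomial symbols, `MM` is `2e`. -/
theorem MM_iota (G : Matrix (Fin n) (Fin n) ℝ) (Q : PS n) :
    MM G (iota n Q) = (2 : ℝ) • iota n (raise G Sum.inl Sum.inr Q) := by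
  rw [← map_smul, raise_apply, vf_apply, lap2_apply, smul_add, smul_smul, MM_apply]
  norm_num only [one_smul]
  have h : (2 : ℝ) • ∑ b, lin G Sum.inr b * pderiv (Sum.inl b) Q =
      ∑ a, ∑ b, G a b • (2 : ℝ) • (X (Sum.inr a) * pderiv (Sum.inl b) Q) := by
    rw [Finset.sum_comm, Finset.smul_sum]
    refine Finset.sum_congr rfl fun b _ => ?_
    rw [lin, Finset.sum_mul, Finset.smul_sum]
    refine Finset.sum_congr rfl fun a _ => ?_
    rw [← smul_eq_C_mul, smul_mul_assoc, smul_comm]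
  rw [h, ← Finset.sum_add_distrib, map_sum]
  refine Finset.sum_congr rfl fun a _ => ?_
  rw [← Finset.sum_add_distrib, map_sum]
  refine Finset.sum_congr rfl fun b _ => ?_
  rw [← smul_add, map_smul, map_add, map_smul, map_mul, iota_inr, mapD_iota, mapD_iota, add_comm]

theorem iota_mem {ℓ : ℕ} {Q : PS n} (hQ : Q ∈ Sd Sum.inr ℓ) : iota n Q ∈ SL n ℓ := by
  classical
  rw [← support_sum_monomial_coeff Q, map_sum]
  refine Submodule.sum_mem _ fun α hα => ?_
  have hd := mem_Sd.mp hQ α (mem_support_iff.mp hα)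
  rw [dg] at hd
  have h : ∀ s : Finset (Fin n), (∏ b ∈ s, X b ^ α (Sum.inr b) : SS n) =
      monomial (∑ b ∈ s, Finsupp.single b (α (Sum.inr b))) 1 := by
    intro s
    induction s using Finset.induction_on with
    | empty => simp
    | insert b s hb ih => rw [Finset.prod_insert hb, Finset.sum_insert hb, ih, X_pow_eq_monomial, monomial_mul, one_mul]
  have h2 : iota n (monomial α (coeff α Q)) =
      (algebraMap ℝ (Sm n) (coeff α Q) * ∏ a, coordS a ^ α (Sum.inl a)) •
        (monomial (∑ b, Finsupp.single b (α (Sum.inr b))) 1 : SS n) := by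
    rw [iota, aeval_monomial, Finsupp.prod_fintype _ _ (by simp), Fintype.prod_sum_type, ← h, smul_eq_C_mul,
      C_mul, mul_assoc, map_prod]
    simp only [Sum.elim_inl, Sum.elim_inr, map_pow]
    rfl
  rw [h2]
  refine Submodule.smul_mem _ _ (mem_SL.mpr fun β hβ => ?_)
  rw [coeff_monomial] at hβ
  have := (ite_ne_right_iff.mp hβ).1
  rw [← this]
  simpa [Finsupp.finsetSum_apply, Finsupp.single_apply] using hd

/-- A symbol of degree at most `ℓ` with polynomial coefficients is a polynomial in `(x, ξ)`. -/
theorem exists_iota {ℓ : ℕ} {p : SS n} (hp : p ∈ SL n ℓ)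
    (h : ∀ α, ∃ q : MvPolynomial (Fin n) ℝ, ∀ x, evx x (coeff α p) = eval x q) :
    ∃ Q ∈ Sd Sum.inr ℓ, iota n Q = p := by
  classical
  choose q hq using h
  refine ⟨∑ α ∈ p.support, rename Sum.inl (q α) * rename Sum.inr (monomial α 1), ?_, ?_⟩
  · refine Submodule.sum_mem _ fun α hα => ?_
    have hα' := mem_SL.mp hp α (mem_support_iff.mp hα)
    induction q α using MvPolynomial.induction_on' with
    | monomial γ r =>
      rw [rename_monomial, rename_monomial, monomial_mul, mul_one]
      refine mem_Sd.mpr fun β hβ => ?_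
      rw [coeff_monomial] at hβ
      have := (ite_ne_right_iff.mp hβ).1
      rw [← this, dg]
      have h1 : ∀ a : Fin n, (Finsupp.mapDomain Sum.inl γ : (Fin n ⊕ Fin n) →₀ ℕ) (Sum.inr a) = 0 :=
        fun a => Finsupp.mapDomain_of_notMem_range _ _ (by simp)
      have h2 : ∀ a : Fin n, (Finsupp.mapDomain Sum.inr α : (Fin n ⊕ Fin n) →₀ ℕ) (Sum.inr a) = α a :=
        fun a => Finsupp.mapDomain_apply Sum.inr_injective _ _
      simpa [h1, h2] using hα'
    | add p q hp hq => rw [map_add, add_mul]; exact Submodule.add_mem _ hp hq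
  · refine SS_ext fun x ξ => ?_
    rw [eval_iota]
    conv_rhs => rw [← support_sum_monomial_coeff p]
    rw [map_sum, map_sum, map_sum]
    refine Finset.sum_congr rfl fun α _ => ?_
    rw [map_mul, eval_rename, eval_rename, map_monomial, Sum.elim_comp_inl, Sum.elim_comp_inr, ← hq,
      eval_monomial, eval_monomial, one_mul]
    rfl

/-- Every symbol of degree at most `ℓ` annihilated by `MM G` is polynomial and lies in `KK G ℓ`. -/
theorem exists_KK (G K : Matrix (Fin n) (Fin n) ℝ) (hKG : K * G = 1) {ℓ : ℕ} {p : SS n}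
    (hp : p ∈ SL n ℓ) (h0 : MM G p = 0) : ∃ Q ∈ KK G ℓ, iota n Q = p := by
  obtain ⟨Q, hQ, rfl⟩ := exists_iota hp fun α =>
    exists_poly (ℓ + 1) _ fun l hl => foldr_D_coeff G K hKG hp h0 l hl α
  refine ⟨Q, ⟨?_, hQ⟩, rfl⟩
  rw [MM_iota] at h0
  have h1 := (smul_eq_zero.mp h0).resolve_left two_ne_zero
  exact LinearMap.mem_ker.mpr (iota_injective (h1.trans iota_zero.symm))

end Sym
end

open MvPolynomial Sym in
/-- the space of linear differential operators of order at most `ℓ`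
(with smooth coefficients) on `ℝⁿ` commuting with the Laplacian — regarded as a
space of operators acting on smooth functions — is finite dimensional of dimension
`Σ_{i=0}^{ℓ} (1/n)·C(n+i, i+1)·C(n+i-1, i)`:  there is a finite family of commuting
symmetries which is linearly independent (as operators on smooth functions), spans
all commuting symmetries of order at most `ℓ`, and whose cardinality is given by
the above sum. -/
theorem stmt17 {n : ℕ} (hn : 0 < n) (ℓ : ℕ)
    (g ginv : Matrix (Fin n) (Fin n) ℝ) (hgsym : g.IsSymm) (hginv : g * ginv = 1) :
    ∃ N : ℕ,
      (N : ℚ) = ∑ i ∈ Finset.range (ℓ + 1),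
        (1 / (n : ℚ)) * ((n + i).choose (i + 1) : ℚ) * ((n + i - 1).choose i : ℚ) ∧
      ∃ B : Fin N → Coeffs n ℓ,
        (∀ j, SmoothCoeffs (B j) ∧ CommutesWithLap ginv (B j)) ∧
        (∀ r : Fin N → ℝ,
          (∀ f, ContDiff ℝ (⊤ : ℕ∞) f → ∀ x, (∑ j, r j * applyOp (B j) f x) = 0) →
          r = 0) ∧
        (∀ c : Coeffs n ℓ, SmoothCoeffs c → CommutesWithLap ginv c →
          ∃ r : Fin N → ℝ, ∀ f, ContDiff ℝ (⊤ : ℕ∞) f →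
            ∀ x, applyOp c f x = ∑ j, r j * applyOp (B j) f x) := by
  have hginv' : ginv * g = 1 := mul_eq_one_comm.mp hginv
  have hGsym : ginv.IsSymm := by
    have h1 : ginv.transpose * g = 1 := by
      rw [← hgsym.eq, ← Matrix.transpose_mul, hginv, Matrix.transpose_one]
    calc ginv.transpose = ginv.transpose * (g * ginv) := by rw [hginv, mul_one]
      _ = ginv := by rw [← mul_assoc, h1, one_mul]
  obtain ⟨hfin, hrank⟩ := finrank_KK hn hGsym hgsym hginv' hginv ℓ
  let b := Module.finBasis ℝ (KK ginv ℓ)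
  choose B hB using fun j => exists_symS (iota_mem (b j).2.2)
  -- the operator attached to a combination of the basis symbols
  have hsum : ∀ (r : Fin (Module.finrank ℝ (KK ginv ℓ)) → ℝ) (f : Sm n) (x : Fin n → ℝ),
      (Op f (iota n (∑ j, r j • b j : KK ginv ℓ)) : (Fin n → ℝ) → ℝ) x =
        ∑ j, r j * applyOp (fun m i => (B j m i : (Fin n → ℝ) → ℝ)) f x := by
    intro r f x
    rw [Submodule.coe_sum, map_sum, map_sum, ← evx_apply, map_sum]
    refine Finset.sum_congr rfl fun j _ => ?_
    rw [Submodule.coe_smul, map_smul, Op_smul, map_smul, ← hB, evx_apply, Op_symS, smul_eq_mul]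
  refine ⟨Module.finrank ℝ (KK ginv ℓ), hrank, fun j m i => (B j m i : (Fin n → ℝ) → ℝ), ?_, ?_, ?_⟩
  · refine fun j => ⟨fun m i => Sm_cd _, (commutes_iff ginv hGsym (B j)).mpr ?_⟩
    rw [hB, MM_iota, LinearMap.mem_ker.mp (b j).2.1]
    exact (congrArg _ iota_zero).trans (smul_zero (A := SS n) _)
  · intro r hr
    have h1 : iota n (∑ j, r j • b j : KK ginv ℓ) = 0 := by
      refine Op_eq_zero fun f => ?_
      ext x
      rw [hsum, hr f (Sm_cd f) x]; rfl
    have h2 : (∑ j, r j • b j : KK ginv ℓ) = 0 :=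
      Subtype.ext (iota_injective (h1.trans iota_zero.symm))
    exact funext (Fintype.linearIndependent_iff.mp b.linearIndependent r h2)
  · intro c hc hcomm
    let c' : (m : Fin (ℓ + 1)) → (Fin (m : ℕ) → Fin n) → Sm n := fun m i => ⟨c m i, hc m i⟩
    obtain ⟨Q, hQ, hQc⟩ := exists_KK ginv g hginv (symS_mem c') ((commutes_iff ginv hGsym c').mp hcomm)
    refine ⟨b.repr ⟨Q, hQ⟩, fun f hf x => ?_⟩
    rw [← hsum _ ⟨f, hf⟩ x, b.sum_repr, hQc, Op_symS]

end
end
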